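/- arXiv:1005.1177 — 4 statements merged into one kernel-verified Lean document; each statement's English description precedes it below -/
import Mathlib

section
/- Suppose F is a field, and m and d are positive integers such that the multinomial coefficient (md)!/(d!)^m is nonzero as an element of F (i.e., its image under the natural ring homomorphism from the integers to F is nonzero). Let X_1, ..., X_m and T_1, ..., T_m be finite subsets of F such that |X_i - X_j| ≤ 2d for all i < j, and |T_i| ≥ (m-1)d + 1 for all i. Then there exists a system of representatives t_i ∈ T_i such that the translated sets X_1 + t_1, ..., X_m + t_m are pairwise disjoint. -/
open Pointwise

/-!
Writing `D i j = X i - X j`, the translates `X i + t i` and `X j + t j` meet exactly when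
`t j - t i ∈ D i j`. So a good `t` is a point of the grid `∏ i, T i` at which the polynomial
`∏_{i < j} ∏_{c ∈ D i j} (x_j - x_i - c)` does not vanish. Padded to degree `2 d` in each pair, this
polynomial has, up to sign, the top-degree form `∏_{i ≠ j} (x_i - x_j) ^ d`, in which the
coefficient of `∏ i, x_i ^ ((m - 1) d)` is the multinomial coefficient by Dyson's constant term
identity. The Combinatorial Nullstellensatz then produces the point.

Dyson's identity is proved following I. J. Good: Lagrange interpolation of `x ^ (n - 1)` gives a
recurrence lowering one exponent at a time, and an exponent that has reached zero is removed by
setting the corresponding variable to zero.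
-/

section PackingTranslates

open Finset MvPolynomial

section TopForm

variable {σ R : Type*}

/-- `HasTopForm p n q` says that `p` has total degree at most `n` and that `q` is its homogeneous
part of degree `n`; `q = 0` is allowed, so that products need no cancellation hypothesis. -/
structure HasTopForm [CommSemiring R] (p : MvPolynomial σ R) (n : ℕ) (q : MvPolynomial σ R) :
    Prop where
  totalDegree_le : p.totalDegree ≤ n
  homogeneousComponent_eq : homogeneousComponent n p = q

namespace HasTopForm

section CommSemiring

variable [CommSemiring R] {p p' q q' : MvPolynomial σ R} {n n' : ℕ}

theorem coeff_eq (h : HasTopForm p n q) {e : σ →₀ ℕ} (he : e.degree = n) :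
    coeff e p = coeff e q := by
  rw [← h.homogeneousComponent_eq, coeff_homogeneousComponent, if_pos he]

theorem coeff_eq_zero (h : HasTopForm p n q) {e : σ →₀ ℕ} (he : n < e.degree) :
    coeff e p = 0 :=
  coeff_eq_zero_of_totalDegree_lt (h.totalDegree_le.trans_lt he)

theorem isHomogeneous (h : HasTopForm p n q) : q.IsHomogeneous n :=
  h.homogeneousComponent_eq ▸ homogeneousComponent_isHomogeneous n p

theorem of_isHomogeneous (h : p.IsHomogeneous n) : HasTopForm p n p :=
  ⟨h.totalDegree_le, homogeneousComponent_eq_self h⟩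

theorem mul (h : HasTopForm p n q) (h' : HasTopForm p' n' q') :
    HasTopForm (p * p') (n + n') (q * q') where
  totalDegree_le :=
    (totalDegree_mul p p').trans (add_le_add h.totalDegree_le h'.totalDegree_le)
  homogeneousComponent_eq := by
    classical
    ext e
    rw [coeff_homogeneousComponent]
    split_ifs with he
    · rw [coeff_mul, coeff_mul]
      refine sum_congr rfl fun uv huv => ?_
      have hdeg : uv.1.degree + uv.2.degree = n + n' := by
        rw [← map_add, mem_antidiagonal.1 huv, he]
      rcases lt_trichotomy uv.1.degree n with hu | hu | hu
      · rw [h'.coeff_eq_zero (by omega), h'.isHomogeneous.coeff_eq_zero (by omega)]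
        simp only [mul_zero]
      · rw [h.coeff_eq hu, h'.coeff_eq (by omega)]
      · rw [h.coeff_eq_zero hu, h.isHomogeneous.coeff_eq_zero hu.ne']
        simp only [zero_mul]
    · exact ((h.isHomogeneous.mul h'.isHomogeneous).coeff_eq_zero he).symm

theorem prod {κ : Type*} {s : Finset κ} {N : κ → ℕ} {P Q : κ → MvPolynomial σ R}
    (h : ∀ i ∈ s, HasTopForm (P i) (N i) (Q i)) :
    HasTopForm (∏ i ∈ s, P i) (∑ i ∈ s, N i) (∏ i ∈ s, Q i) := by
  classical
  induction s using Finset.induction_on with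
  | empty => simpa using of_isHomogeneous (isHomogeneous_one σ R)
  | insert a s ha ih =>
    rw [sum_insert ha, prod_insert ha, prod_insert ha]
    exact (h a (mem_insert_self a s)).mul (ih fun i hi => h i (mem_insert_of_mem hi))

end CommSemiring

section CommRing

variable [CommRing R] {p q : MvPolynomial σ R} {n : ℕ}

theorem sub_C (h : HasTopForm p n q) (hn : n ≠ 0) (c : R) : HasTopForm (p - C c) n q where
  totalDegree_le := (totalDegree_sub_C_le p c).trans h.totalDegree_le
  homogeneousComponent_eq := by
    have hc : homogeneousComponent n (C c : MvPolynomial σ R) = 0 :=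
      homogeneousComponent_eq_zero n _ (by simpa using Nat.pos_of_ne_zero hn)
    rw [map_sub, hc, sub_zero, h.homogeneousComponent_eq]

theorem exists_eval_ne_zero [IsDomain R] [Finite σ] {e : σ →₀ ℕ} (h : HasTopForm p e.degree q)
    (he : coeff e q ≠ 0) (T : σ → Finset R) (hT : ∀ i, e i < #(T i)) :
    ∃ t : σ → R, (∀ i, t i ∈ T i) ∧ eval t p ≠ 0 := by
  rw [← h.coeff_eq rfl] at he
  exact combinatorial_nullstellensatz_exists_eval_nonzero p e he
    (h.totalDegree_le.antisymm (le_totalDegree (mem_support_iff.2 he))) T hT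

end CommRing

end HasTopForm

theorem exists_hasTopForm_pow_eval_eq_zero [CommRing R] {l : MvPolynomial σ R}
    (hl : l.IsHomogeneous 1) {D : Finset R} {n : ℕ} (hD : #D ≤ n) :
    ∃ p, HasTopForm p n (l ^ n) ∧ ∀ t, eval t l ∈ D → eval t p = 0 := by
  refine ⟨(∏ c ∈ D, (l - C c)) * l ^ (n - #D), ?_, fun t ht => ?_⟩
  · have hprod : HasTopForm (∏ c ∈ D, (l - C c)) (∑ _c ∈ D, 1) (∏ _c ∈ D, l) :=
      .prod fun c _ => (HasTopForm.of_isHomogeneous hl).sub_C one_ne_zero c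
    have hpow : HasTopForm (l ^ (n - #D)) (n - #D) (l ^ (n - #D)) :=
      .of_isHomogeneous (by simpa using hl.pow (n - #D))
    simpa [← pow_add, hD] using hprod.mul hpow
  · rw [map_mul, map_prod, prod_eq_zero ht (by simp), zero_mul]

theorem exists_hasTopForm_sub_pow_mul_sub_pow [CommRing R] (i j : σ) {D : Finset R} {a b : ℕ}
    (hD : #D ≤ a + b) :
    ∃ p : MvPolynomial σ R, HasTopForm p (a + b) ((X i - X j) ^ a * (X j - X i) ^ b) ∧
      ∀ t, t j - t i ∈ D → eval t p = 0 := by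
  have hl : (X j - X i : MvPolynomial σ R).IsHomogeneous 1 :=
    (isHomogeneous_X R j).sub (isHomogeneous_X R i)
  obtain ⟨p, hp, hzero⟩ := exists_hasTopForm_pow_eval_eq_zero hl hD
  refine ⟨C ((-1) ^ a) * p, ?_, fun t ht => ?_⟩
  · have hsign : (X i - X j) ^ a * (X j - X i) ^ b =
        (C ((-1) ^ a) * (X j - X i) ^ (a + b) : MvPolynomial σ R) := by
      rw [← neg_sub (X j) (X i), neg_pow, pow_add, mul_assoc, map_pow, map_neg, map_one]
    simpa only [hsign, zero_add] using (HasTopForm.of_isHomogeneous (isHomogeneous_C σ _)).mul hp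
  · rw [map_mul, hzero t (by simpa using ht), mul_zero]

end TopForm

section Multinomial

variable {σ : Type*} [DecidableEq σ] {s : Finset σ} {a : σ → ℕ}

theorem sub_single_add_single {i : σ} (hi : a i ≠ 0) : a - Pi.single i 1 + Pi.single i 1 = a := by
  refine tsub_add_cancel_of_le fun j => ?_
  by_cases hj : j = i
  · subst hj
    simpa using Nat.one_le_iff_ne_zero.2 hi
  · simp [hj]

theorem sum_add_single {M : Type*} [AddCommMonoid M] {i : σ} (hi : i ∈ s) (b : σ → M) (x : M) :
    ∑ j ∈ s, (b + Pi.single i x : σ → M) j = ∑ j ∈ s, b j + x := by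
  simp [sum_add_distrib, hi]

theorem prod_factorial_add_single {i : σ} (hi : i ∈ s) (b : σ → ℕ) :
    ∏ j ∈ s, ((b + Pi.single i 1 : σ → ℕ) j).factorial = (b i + 1) * ∏ j ∈ s, (b j).factorial := by
  have hrest : ∏ j ∈ s.erase i, ((b + Pi.single i 1 : σ → ℕ) j).factorial =
      ∏ j ∈ s.erase i, (b j).factorial :=
    prod_congr rfl fun j hj => by simp [ne_of_mem_erase hj]
  rw [← mul_prod_erase s _ hi, ← mul_prod_erase s (fun j => (b j).factorial) hi, hrest]
  simp [Nat.factorial_succ, mul_assoc]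

theorem multinomial_add_single_mul {i : σ} (hi : i ∈ s) (b : σ → ℕ) :
    Nat.multinomial s (b + Pi.single i 1) * (b i + 1) =
      Nat.multinomial s b * (∑ j ∈ s, b j + 1) := by
  have hpos : 0 < ∏ j ∈ s, (b j).factorial := prod_pos fun _ _ => Nat.factorial_pos _
  have hspec := Nat.multinomial_spec s (b + Pi.single i 1)
  rw [sum_add_single hi, prod_factorial_add_single hi, Nat.factorial_succ,
    ← Nat.multinomial_spec s b] at hspec
  apply Nat.eq_of_mul_eq_mul_left hpos
  linarith

theorem sum_multinomial_sub_single (hs : s.Nonempty) (ha : ∀ i ∈ s, a i ≠ 0) :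
    ∑ i ∈ s, Nat.multinomial s (a - Pi.single i 1) = Nat.multinomial s a := by
  have hterm : ∀ i ∈ s, Nat.multinomial s (a - Pi.single i 1) * ∑ j ∈ s, a j =
      Nat.multinomial s a * a i := fun i hi => by
    have h := multinomial_add_single_mul hi (a - Pi.single i 1)
    rw [← sum_add_single hi, sub_single_add_single (ha i hi)] at h
    rw [← h, Pi.sub_apply, Pi.single_eq_same, Nat.sub_add_cancel (Nat.pos_of_ne_zero (ha i hi))]
  have hpos : 0 < ∑ j ∈ s, a j := sum_pos (fun i hi => Nat.pos_of_ne_zero (ha i hi)) hs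
  apply Nat.eq_of_mul_eq_mul_right hpos
  rw [sum_mul, sum_congr rfl hterm, mul_sum]

end Multinomial

theorem coeff_aeval_update_X_zero {σ R : Type*} [DecidableEq σ] [CommSemiring R] {k : σ}
    {e : σ →₀ ℕ} (he : e k = 0) (p : MvPolynomial σ R) :
    coeff e (aeval (Function.update X k 0) p) = coeff e p := by
  induction p using MvPolynomial.induction_on' with
  | add p q hp hq => rw [map_add, coeff_add, coeff_add, hp, hq]
  | monomial u r =>
    by_cases hu : u k = 0
    · have hX : (u.prod fun i n => Function.update (X : σ → MvPolynomial σ R) k 0 i ^ n) =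
          u.prod fun i n => X i ^ n := by
        refine Finsupp.prod_congr fun i hi => ?_
        rw [Function.update_of_ne]
        rintro rfl
        exact Finsupp.mem_support_iff.1 hi hu
      rw [aeval_monomial, hX, algebraMap_eq, ← monomial_eq]
    · have hX : (u.prod fun i n => Function.update (X : σ → MvPolynomial σ R) k 0 i ^ n) = 0 :=
        prod_eq_zero (Finsupp.mem_support_iff.2 hu) (by simp [hu])
      have hne : u ≠ e := by
        rintro rfl
        exact hu he
      rw [aeval_monomial, hX, mul_zero, coeff_zero, coeff_monomial, if_neg hne]

section Dyson

variable {σ : Type*}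

/-- The exponent of `∏ i ∈ s, x_i ^ ((#s - 1) * a_i)`, the monomial of `dysonProduct` that
corresponds to the constant term of Dyson's product. -/
noncomputable def dysonExponent (s : Finset σ) (a : σ → ℕ) : σ →₀ ℕ :=
  ∑ i ∈ s, Finsupp.single i ((#s - 1) * a i)

theorem degree_dysonExponent (s : Finset σ) (a : σ → ℕ) :
    (dysonExponent s a).degree = ∑ i ∈ s, (#s - 1) * a i := by
  simp only [dysonExponent, map_sum, Finsupp.degree_single]

variable [DecidableEq σ]

/-- The polynomial form of Dyson's product `∏_{i ≠ j} (1 - x_j / x_i) ^ a_i`: it has been multiplied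
by `∏ i ∈ s, x_i ^ ((#s - 1) * a_i)` to clear denominators. -/
noncomputable def dysonProduct (R : Type*) [CommRing R] (s : Finset σ) (a : σ → ℕ) :
    MvPolynomial σ R :=
  ∏ i ∈ s, ∏ j ∈ s.erase i, (X i - X j) ^ a i

theorem dysonExponent_apply (s : Finset σ) (a : σ → ℕ) (k : σ) :
    dysonExponent s a k = if k ∈ s then (#s - 1) * a k else 0 := by
  simp [dysonExponent, Finsupp.finsetSum_apply, Finsupp.single_apply]

variable {s : Finset σ}

theorem dysonExponent_add_single {i : σ} (hi : i ∈ s) (b : σ → ℕ) :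
    dysonExponent s (b + Pi.single i 1) = dysonExponent s b + Finsupp.single i (#s - 1) := by
  ext k
  by_cases hk : k = i
  · subst hk
    simp [dysonExponent_apply, hi, mul_add]
  · simp [dysonExponent_apply, hk]

theorem dysonExponent_eq_erase_add {k : σ} {a : σ → ℕ} (hk : k ∈ s) (ha : a k = 0) :
    dysonExponent s a =
      dysonExponent (s.erase k) a + ∑ i ∈ s.erase k, Finsupp.single i (a i) := by
  rw [dysonExponent, dysonExponent, ← add_sum_erase s _ hk, ha, mul_zero, Finsupp.single_zero,
    zero_add, ← sum_add_distrib]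
  refine sum_congr rfl fun i hi => ?_
  have hcard : #s - 1 = #(s.erase k) - 1 + 1 := by
    have := card_erase_add_one hk
    have := card_pos.2 ⟨i, hi⟩
    omega
  rw [hcard, ← Finsupp.single_add, add_one_mul]

variable (R : Type*) [CommRing R]

theorem map_dysonProduct {S : Type*} [CommRing S] (f : R →+* S) (a : σ → ℕ) :
    map f (dysonProduct R s a) = dysonProduct S s a := by
  simp [dysonProduct]

theorem dysonProduct_add_single {i : σ} (hi : i ∈ s) (b : σ → ℕ) :
    dysonProduct R s (b + Pi.single i 1) =
      dysonProduct R s b * ∏ j ∈ s.erase i, (X i - X j) := by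
  have hsingle : ∏ k ∈ s, ∏ j ∈ s.erase k, (X k - X j : MvPolynomial σ R) ^
      (Pi.single i 1 : σ → ℕ) k = ∏ j ∈ s.erase i, (X i - X j) := by
    rw [prod_eq_single_of_mem i hi fun k _ hk => by simp [hk]]
    simp
  simp only [dysonProduct, Pi.add_apply, pow_add, prod_mul_distrib, hsingle]

theorem aeval_update_X_zero_dysonProduct {k : σ} {a : σ → ℕ} (hk : k ∈ s) (ha : a k = 0) :
    aeval (Function.update X k 0) (dysonProduct R s a) =
      dysonProduct R (s.erase k) a * ∏ i ∈ s.erase k, X i ^ a i := by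
  rw [dysonProduct, ← mul_prod_erase s _ hk, dysonProduct]
  simp only [ha, pow_zero, prod_const_one, one_mul, map_prod, map_pow, map_sub, aeval_X]
  rw [← prod_mul_distrib]
  refine prod_congr rfl fun i hi => ?_
  have hki : k ∈ s.erase i := mem_erase.2 ⟨(ne_of_mem_erase hi).symm, hk⟩
  rw [← prod_erase_mul (s.erase i) _ hki, erase_right_comm, Function.update_self,
    Function.update_of_ne (ne_of_mem_erase hi), sub_zero]
  congr 1
  refine prod_congr rfl fun j hj => ?_
  rw [Function.update_of_ne (ne_of_mem_erase (mem_of_mem_erase hj))]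

theorem coeff_dysonProduct_erase {k : σ} {a : σ → ℕ} (hk : k ∈ s) (ha : a k = 0) :
    coeff (dysonExponent s a) (dysonProduct R s a) =
      coeff (dysonExponent (s.erase k) a) (dysonProduct R (s.erase k) a) := by
  have hmonomial : ∏ i ∈ s.erase k, (X i : MvPolynomial σ R) ^ a i =
      monomial (∑ i ∈ s.erase k, Finsupp.single i (a i)) 1 := by
    simp only [monomial_sum_one, X_pow_eq_monomial]
  rw [← coeff_aeval_update_X_zero (k := k) (by simp [dysonExponent_apply, ha]),
    aeval_update_X_zero_dysonProduct R hk ha, hmonomial, dysonExponent_eq_erase_add hk ha,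
    coeff_mul_monomial, mul_one]

theorem sum_pow_div_prod_sub_eq_one {K : Type*} [Field K] (hs : s.Nonempty) {v : σ → K}
    (hv : Set.InjOn v s) :
    ∑ i ∈ s, v i ^ (#s - 1) / ∏ j ∈ s.erase i, (v i - v j) = 1 := by
  have hdeg : (#s : WithBot ℕ) = (Polynomial.X ^ (#s - 1) : Polynomial K).degree + 1 := by
    rw [Polynomial.degree_X_pow]
    exact_mod_cast (Nat.sub_add_cancel hs.card_pos).symm
  simpa using (Lagrange.leadingCoeff_eq_sum hv hdeg).symm

theorem dysonProduct_eq_sum [IsDomain R] (hs : s.Nonempty) {a : σ → ℕ} (ha : ∀ i ∈ s, a i ≠ 0) :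
    dysonProduct R s a =
      ∑ i ∈ s, dysonProduct R s (a - Pi.single i 1) * X i ^ (#s - 1) := by
  let φ := algebraMap (MvPolynomial σ R) (FractionRing (MvPolynomial σ R))
  have hφ : Function.Injective φ := IsFractionRing.injective _ _
  have hv : Function.Injective fun i => φ (X i) := hφ.comp X_injective
  apply hφ
  rw [← mul_one (φ (dysonProduct R s a)), ← sum_pow_div_prod_sub_eq_one hs hv.injOn, mul_sum,
    map_sum]
  refine sum_congr rfl fun i hi => ?_
  have hne : ∏ j ∈ s.erase i, (φ (X i) - φ (X j)) ≠ 0 :=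
    prod_ne_zero_iff.2 fun j hj => sub_ne_zero.2 fun h => ne_of_mem_erase hj (hv h.symm)
  conv_lhs => rw [← sub_single_add_single (ha i hi), dysonProduct_add_single R hi]
  simp only [map_mul, map_prod, map_sub, map_pow]
  rw [mul_assoc, mul_div_cancel₀ _ hne]

theorem coeff_dysonProduct_of_isDomain [IsDomain R] (s : Finset σ) (a : σ → ℕ) :
    coeff (dysonExponent s a) (dysonProduct R s a) = Nat.multinomial s a := by
  induction hn : #s + ∑ i ∈ s, a i using Nat.strong_induction_on generalizing s a with
  | _ n ih =>
  subst hn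
  rcases s.eq_empty_or_nonempty with rfl | hs
  · simp [dysonExponent, dysonProduct]
  by_cases hzero : ∃ k ∈ s, a k = 0
  · obtain ⟨k, hk, hak⟩ := hzero
    have hcard := card_erase_add_one hk
    have hsum := add_sum_erase s a hk
    have hmultinomial : Nat.multinomial (s.erase k) a = Nat.multinomial s a :=
      Nat.multinomial_congr_of_sdiff (erase_subset k s) (by grind) fun _ _ => rfl
    rw [coeff_dysonProduct_erase R hk hak, ih _ (by omega) _ a rfl, hmultinomial]
  · have ha : ∀ i ∈ s, a i ≠ 0 := fun i hi h => hzero ⟨i, hi, h⟩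
    rw [dysonProduct_eq_sum R hs ha, coeff_sum, ← sum_multinomial_sub_single hs ha, Nat.cast_sum]
    refine sum_congr rfl fun i hi => ?_
    have hexponent := dysonExponent_add_single hi (a - Pi.single i 1)
    have hsum := sum_add_single hi (a - Pi.single i 1) 1
    rw [sub_single_add_single (ha i hi)] at hexponent hsum
    rw [hexponent, X_pow_eq_monomial, coeff_mul_monomial, mul_one]
    exact ih _ (by omega) s _ rfl

/-- **Dyson's constant term identity**. -/
theorem coeff_dysonProduct (s : Finset σ) (a : σ → ℕ) :
    coeff (dysonExponent s a) (dysonProduct R s a) = Nat.multinomial s a := by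
  rw [← map_dysonProduct ℤ (Int.castRingHom R), coeff_map, coeff_dysonProduct_of_isDomain]
  simp

end Dyson

section Packing

variable {R ι : Type*} [CommRing R] [Fintype ι] [LinearOrder ι]

theorem exists_hasTopForm_dysonProduct {a : ι → ℕ} {D : ι → ι → Finset R}
    (hD : ∀ i j, i < j → #(D i j) ≤ a i + a j) :
    ∃ p, HasTopForm p (dysonExponent univ a).degree (dysonProduct R univ a) ∧
      ∀ t, (∃ i j, i < j ∧ t j - t i ∈ D i j) → eval t p = 0 := by
  let : LocallyFiniteOrderTop ι := .ofIci' ι (fun i => {j | i ≤ j}) (by simp)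
  let : LocallyFiniteOrderBot ι := .ofIic' ι (fun i => {j | j ≤ i}) (by simp)
  choose! g hg hzero using fun i j hij =>
    exists_hasTopForm_sub_pow_mul_sub_pow i j (hD i j hij)
  refine ⟨∏ i, ∏ j ∈ Ioi i, g i j, ?_, ?_⟩
  · have hdegree : (dysonExponent univ a).degree = ∑ i, ∑ j ∈ Ioi i, (a i + a j) := by
      rw [degree_dysonExponent, sum_sum_Ioi_add_eq_sum_sum_off_diag fun _ i => a i]
      simp [card_compl]
    have hproduct : dysonProduct R univ a =
        ∏ i, ∏ j ∈ Ioi i, (X i - X j) ^ a i * (X j - X i) ^ a j := by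
      rw [prod_prod_Ioi_mul_eq_prod_prod_off_diag fun j i => (X i - X j) ^ a i]
      simp only [dysonProduct, compl_singleton]
    rw [hdegree, hproduct]
    exact .prod fun i _ => .prod fun j hj => hg i j (mem_Ioi.1 hj)
  · rintro t ⟨i, j, hij, ht⟩
    simp only [map_prod]
    exact prod_eq_zero (mem_univ i) (prod_eq_zero (mem_Ioi.2 hij) (hzero i j hij t ht))

theorem exists_mem_forall_sub_notMem [IsDomain R] {a : ι → ℕ}
    (ha : (Nat.multinomial univ a : R) ≠ 0) {D : ι → ι → Finset R} {T : ι → Finset R}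
    (hD : ∀ i j, i < j → #(D i j) ≤ a i + a j)
    (hT : ∀ i, (Fintype.card ι - 1) * a i < #(T i)) :
    ∃ t : ι → R, (∀ i, t i ∈ T i) ∧ ∀ i j, i < j → t j - t i ∉ D i j := by
  obtain ⟨p, hp, hzero⟩ := exists_hasTopForm_dysonProduct hD
  rw [← coeff_dysonProduct] at ha
  obtain ⟨t, ht, hne⟩ := hp.exists_eval_ne_zero ha T (by simpa [dysonExponent_apply] using hT)
  exact ⟨t, ht, fun i j hij hmem => hne (hzero t ⟨i, j, hij, hmem⟩)⟩

theorem disjoint_image_add_right_of_sub_notMem {G : Type*} [AddCommGroup G] [DecidableEq G]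
    {A B : Finset G} {s t : G} (h : t - s ∉ A - B) :
    Disjoint (A.image fun x => x + s) (B.image fun x => x + t) := by
  simp only [disjoint_left, mem_image]
  rintro _ ⟨x, hx, rfl⟩ ⟨y, hy, hxy⟩
  refine h (mem_sub.2 ⟨x, hx, y, hy, ?_⟩)
  rw [sub_eq_sub_iff_add_eq_add, ← hxy, add_comm]

theorem packing_translates_field_general [IsDomain R] [DecidableEq R] (a : ι → ℕ)
    (ha : (Nat.multinomial univ a : R) ≠ 0) (X T : ι → Finset R)
    (hX : ∀ i j, i < j → #(X i - X j) ≤ a i + a j)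
    (hT : ∀ i, (Fintype.card ι - 1) * a i < #(T i)) :
    ∃ t : ι → R, (∀ i, t i ∈ T i) ∧
      ∀ i j, i ≠ j →
        Disjoint ((X i).image fun x => x + t i) ((X j).image fun x => x + t j) := by
  obtain ⟨t, ht, hsub⟩ := exists_mem_forall_sub_notMem ha hX hT
  refine ⟨t, ht, fun i j hij => ?_⟩
  rcases hij.lt_or_gt with h | h
  · exact disjoint_image_add_right_of_sub_notMem (hsub i j h)
  · exact (disjoint_image_add_right_of_sub_notMem (hsub j i h)).symm

end Packing

end PackingTranslates

/-- Packing translates in a field. -/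
theorem packing_translates_field (F : Type*) [Field F] [DecidableEq F]
    (m d : ℕ) (hm : 0 < m) (hd : 0 < d)
    (hchar : (((m * d).factorial / d.factorial ^ m : ℕ) : F) ≠ 0)
    (X T : Fin m → Finset F)
    (hX : ∀ i j : Fin m, i < j → (X i - X j).card ≤ 2 * d)
    (hT : ∀ i, (m - 1) * d + 1 ≤ (T i).card) :
    ∃ t : Fin m → F, (∀ i, t i ∈ T i) ∧
      ∀ i j, i ≠ j →
        Disjoint ((X i).image (fun x => x + t i))
          ((X j).image (fun x => x + t j)) :=
  packing_translates_field_general (fun _ => d) (by simpa [Nat.multinomial] using hchar) X T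
    (fun i j hij => (hX i j hij).trans_eq (two_mul d)) (by simpa using hT)
end

section
/- Let p be a prime, and let m and d be positive integers with md < p. Let X_1, ..., X_m be subsets of F_p such that |X_i - X_j| ≤ 2d for all i < j. Then there exist elements t_1, ..., t_m ∈ F_p such that the translated sets X_1 + t_1, ..., X_m + t_m are pairwise disjoint. -/
open Pointwise

/-!
Choose monic polynomials `q i j` of degree `2 * d` vanishing on `X j - X i`; translates `t` work as
soon as `∏_{i < j} q i j (t i - t j) ≠ 0`. By the Combinatorial Nullstellensatz it suffices that the
coefficient of `∏ i, x i ^ (d * (m - 1))` in `∏_{i < j} q i j (x i - x j)` is nonzero. This monomial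
has top degree, so its coefficient is that of `∏_{i < j} (x i - x j) ^ (2 * d)` and does not depend
on the choice of the `q i j`. Take them all to have roots `-d, …, d - 1`. On the grid
`{0, …, d * (m - 1)} ^ m` the product is then nonzero only if the half-open intervals
`[x i, x i + d)` are disjoint, with a gap whenever `i < j` and `x i < x j`. There is room for
exactly one such placement, the tight packing in decreasing order, and a polynomial of this degree
with exactly one nonzero value on the grid must have a nonzero coefficient at that monomial.
-/

section TopDegree

open MvPolynomial

variable {σ κ R : Type*} [CommSemiring R]

lemma homogeneousComponent_mul_of_totalDegree_le {m n : ℕ} {f g : MvPolynomial σ R}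
    (hf : f.totalDegree ≤ m) (hg : g.totalDegree ≤ n) :
    homogeneousComponent (m + n) (f * g) =
      homogeneousComponent m f * homogeneousComponent n g := by
  classical
  ext t
  have hterm (a : (σ →₀ ℕ) × (σ →₀ ℕ)) (ha : a ∈ Finset.HasAntidiagonal.antidiagonal t) :
      (if t.degree = m + n then coeff a.1 f * coeff a.2 g else 0) =
        coeff a.1 (homogeneousComponent m f) * coeff a.2 (homogeneousComponent n g) := by
    have hdeg : a.1.degree + a.2.degree = t.degree := by
      rw [← map_add, Finset.HasAntidiagonal.mem_antidiagonal.mp ha]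
    have hfa (h : m < a.1.degree) : coeff a.1 f = 0 :=
      coeff_eq_zero_of_totalDegree_lt (hf.trans_lt h)
    have hga (h : n < a.2.degree) : coeff a.2 g = 0 :=
      coeff_eq_zero_of_totalDegree_lt (hg.trans_lt h)
    simp only [coeff_homogeneousComponent]
    grind
  rw [coeff_homogeneousComponent, coeff_mul, coeff_mul, ← Finset.sum_congr rfl hterm]
  split_ifs <;> simp

lemma homogeneousComponent_prod_of_totalDegree_le (s : Finset κ) {n : κ → ℕ}
    {f : κ → MvPolynomial σ R} (hf : ∀ k ∈ s, (f k).totalDegree ≤ n k) :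
    homogeneousComponent (∑ k ∈ s, n k) (∏ k ∈ s, f k) =
      ∏ k ∈ s, homogeneousComponent (n k) (f k) := by
  classical
  induction s using Finset.induction_on with
  | empty => simp
  | insert k s hk ih =>
    rw [Finset.forall_mem_insert] at hf
    have hs : (∏ k ∈ s, f k).totalDegree ≤ ∑ k ∈ s, n k :=
      (totalDegree_finsetProd s f).trans (Finset.sum_le_sum hf.2)
    rw [Finset.prod_insert hk, Finset.sum_insert hk, Finset.prod_insert hk,
      homogeneousComponent_mul_of_totalDegree_le hf.1 hs, ih hf.2]

lemma totalDegree_aeval_le {l : MvPolynomial σ R} (hl : l.totalDegree ≤ 1) (q : Polynomial R) :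
    (Polynomial.aeval l q).totalDegree ≤ q.natDegree := by
  rw [Polynomial.aeval_eq_sum_range]
  refine totalDegree_finsetSum_le fun i hi => (totalDegree_smul_le _ _).trans ?_
  calc (l ^ i).totalDegree ≤ i * l.totalDegree := totalDegree_pow l i
    _ ≤ i * 1 := Nat.mul_le_mul_left i hl
    _ ≤ q.natDegree := by simpa [Nat.lt_succ_iff] using hi

lemma homogeneousComponent_natDegree_aeval {l : MvPolynomial σ R} (hl : l.IsHomogeneous 1)
    {q : Polynomial R} (hq : q.Monic) :
    homogeneousComponent q.natDegree (Polynomial.aeval l q) = l ^ q.natDegree := by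
  have hpow (i : ℕ) : (l ^ i).IsHomogeneous i := by simpa using hl.pow i
  rw [Polynomial.aeval_eq_sum_range, map_sum, Finset.sum_range_succ, Finset.sum_eq_zero, zero_add,
    hq.coeff_natDegree, one_smul, homogeneousComponent_of_mem (hpow _), if_pos rfl]
  intro i hi
  rw [map_smul, homogeneousComponent_of_mem (hpow i), if_neg (Finset.mem_range.mp hi).ne',
    smul_zero]

lemma eval_polynomial_aeval (x : σ → R) (l : MvPolynomial σ R) (q : Polynomial R) :
    eval x (Polynomial.aeval l q) = q.eval (eval x l) := by
  simpa [coe_aeval_eq_eval, Polynomial.coe_aeval_eq_eval] using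
    (Polynomial.aeval_algHom_apply (MvPolynomial.aeval x : MvPolynomial σ R →ₐ[R] R) l q).symm

lemma totalDegree_prod_aeval_le (s : Finset κ) {l : κ → MvPolynomial σ R}
    (hl : ∀ k ∈ s, (l k).totalDegree ≤ 1) (q : κ → Polynomial R) :
    (∏ k ∈ s, Polynomial.aeval (l k) (q k)).totalDegree ≤ ∑ k ∈ s, (q k).natDegree :=
  (totalDegree_finsetProd s _).trans
    (Finset.sum_le_sum fun k hk => totalDegree_aeval_le (hl k hk) (q k))

lemma coeff_prod_aeval (s : Finset κ) {l : κ → MvPolynomial σ R}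
    (hl : ∀ k ∈ s, (l k).IsHomogeneous 1) {q : κ → Polynomial R} (hq : ∀ k ∈ s, (q k).Monic)
    {t : σ →₀ ℕ} (ht : t.degree = ∑ k ∈ s, (q k).natDegree) :
    coeff t (∏ k ∈ s, Polynomial.aeval (l k) (q k)) =
      coeff t (∏ k ∈ s, l k ^ (q k).natDegree) := by
  have htop : homogeneousComponent t.degree (∏ k ∈ s, Polynomial.aeval (l k) (q k)) =
      ∏ k ∈ s, l k ^ (q k).natDegree := by
    rw [ht, homogeneousComponent_prod_of_totalDegree_le s
      fun k hk => totalDegree_aeval_le (hl k hk).totalDegree_le (q k)]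
    exact Finset.prod_congr rfl fun k hk => homogeneousComponent_natDegree_aeval (hl k hk) (hq k hk)
  rw [← htop, coeff_homogeneousComponent, if_pos rfl]

end TopDegree

section Nullstellensatz

open MvPolynomial

variable {σ R : Type*} [Fintype σ] [CommRing R]

/-- The polynomial `∏ i, ∏ b ∈ B i, (X i - b)`, which vanishes at every point having some
coordinate `i` in `B i`. -/
noncomputable def gridPolynomial (B : σ → Finset R) : MvPolynomial σ R :=
  ∏ i, Polynomial.aeval (X i) (∏ b ∈ B i, (Polynomial.X - Polynomial.C b))

lemma eval_gridPolynomial (B : σ → Finset R) (x : σ → R) :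
    eval x (gridPolynomial B) = ∏ i, ∏ b ∈ B i, (x i - b) := by
  simp [gridPolynomial]

variable {B : σ → Finset R} {t : σ →₀ ℕ}

lemma totalDegree_gridPolynomial_le [Nontrivial R] (ht : ∀ i, (B i).card = t i) :
    (gridPolynomial B).totalDegree ≤ t.degree := by
  refine (totalDegree_prod_aeval_le _ (fun i _ => (isHomogeneous_X R i).totalDegree_le) _).trans ?_
  simp [Finsupp.degree_eq_sum, ht]

lemma coeff_gridPolynomial [Nontrivial R] (ht : ∀ i, (B i).card = t i) :
    coeff t (gridPolynomial B) = 1 := by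
  have hmonomial : ∏ i, (X i : MvPolynomial σ R) ^ t i = monomial t 1 := by
    rw [monomial_eq, Finsupp.prod_fintype _ _ (by simp), C_1, one_mul]
  rw [gridPolynomial, coeff_prod_aeval _ (fun i _ => isHomogeneous_X R i)
    (fun i _ => Polynomial.monic_prod_X_sub_C _ _) (by simp [Finsupp.degree_eq_sum, ht])]
  classical simp [ht, hmonomial, coeff_monomial]

-- Otherwise combining `f` with a grid polynomial so that their values at `a` cancel gives a
-- polynomial vanishing on a whole grid, against the Combinatorial Nullstellensatz.
omit [Fintype σ] in
lemma coeff_ne_zero_of_eval_eq_zero_of_ne [Finite σ] [IsDomain R] {f : MvPolynomial σ R}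
    (hf : f.totalDegree ≤ t.degree) {A : σ → Finset R} (hA : ∀ i, t i < (A i).card)
    {a : σ → R} (ha : ∀ i, a i ∈ A i) (hfa : eval a f ≠ 0)
    (hfA : ∀ x, (∀ i, x i ∈ A i) → x ≠ a → eval x f = 0) :
    coeff t f ≠ 0 := by
  classical
  cases nonempty_fintype σ
  intro hft
  have hB (i : σ) : ∃ B ⊆ (A i).erase (a i), B.card = t i :=
    Finset.exists_subset_card_eq <| by
      rw [Finset.card_erase_of_mem (ha i)]
      exact Nat.le_sub_one_of_lt (hA i)
  choose B hBA hBt using hB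
  have haB (i : σ) : a i ∉ B i := fun h => Finset.notMem_erase _ _ (hBA i h)
  let Q : MvPolynomial σ R := C (eval a f) * gridPolynomial B - C (eval a (gridPolynomial B)) * f
  have hQt : coeff t Q ≠ 0 := by simpa [Q, coeff_gridPolynomial hBt, hft] using hfa
  have hQdeg : Q.totalDegree = t.degree := by
    refine le_antisymm ?_ (le_totalDegree (mem_support_iff.mpr hQt))
    refine (totalDegree_sub _ _).trans (max_le ?_ ?_) <;>
      refine (totalDegree_mul _ _).trans ?_ <;> simp [totalDegree_gridPolynomial_le hBt, hf]
  obtain ⟨x, hx, hQx⟩ := combinatorial_nullstellensatz_exists_eval_nonzero Q t hQt hQdeg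
    (fun i => insert (a i) (B i))
    (fun i => by rw [Finset.card_insert_of_notMem (haB i), hBt]; exact Nat.lt_succ_self _)
  apply hQx
  by_cases hxa : x = a
  · simp [Q, hxa, mul_comm]
  have hxA (i : σ) : x i ∈ A i :=
    Finset.insert_subset (ha i) ((hBA i).trans (Finset.erase_subset _ _)) (hx i)
  have hxB : eval x (gridPolynomial B) = 0 := by
    obtain ⟨i, hi⟩ := Function.ne_iff.mp hxa
    rw [eval_gridPolynomial]
    exact Finset.prod_eq_zero (Finset.mem_univ i)
      (Finset.prod_eq_zero (Finset.mem_of_mem_insert_of_ne (hx i) hi) (sub_self _))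
  simp [Q, hfA x hxA hxa, hxB]

end Nullstellensatz

section RankPacking

variable {ι : Type*} [LinearOrder ι]

lemma card_filter_lt_of_forall_le {s : Finset ι} {b : ι} (hb : b ∈ s) (hmin : ∀ j ∈ s, b ≤ j) :
    Finset.card {j ∈ s | b < j} = s.card - 1 := by
  rw [← Finset.card_erase_of_mem hb, ← Finset.filter_ne' s b]
  exact congrArg Finset.card (Finset.filter_congr fun j hj => (hmin j hj).lt_iff_ne')

lemma eq_mul_card_filter_lt (d : ℕ) (s : Finset ι) (v : ι → ℕ)
    (hle : ∀ i ∈ s, v i ≤ d * (s.card - 1))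
    (hsep : ∀ i ∈ s, ∀ j ∈ s, i < j → v j + d ≤ v i ∨ v i + d < v j) :
    ∀ i ∈ s, v i = d * {j ∈ s | i < j}.card := by
  rcases d.eq_zero_or_pos with rfl | hd
  · simpa using hle
  induction s using Finset.induction_on_max_value v with
  | empty => simp
  | insert k s hks hmax ih =>
    rw [Finset.card_insert_of_notMem hks, Nat.add_sub_cancel, Finset.forall_mem_insert] at hle
    have hgap (i : ι) (hi : i ∈ s) : v i + d ≤ v k := by
      have := hmax i hi
      rcases lt_or_gt_of_ne (ne_of_mem_of_not_mem hi hks) with hik | hki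
      · have := hsep i (by simp [hi]) k (by simp) hik
        omega
      · have := hsep k (by simp) i (by simp [hi]) hki
        omega
    rcases s.eq_empty_or_nonempty with rfl | hs
    · simpa [Finset.filter_singleton] using hle.1
    have hcard : d * s.card = d * (s.card - 1) + d := by
      rw [← Nat.mul_succ, Nat.succ_eq_add_one, Nat.sub_add_cancel hs.card_pos]
    have hvs := ih
      (fun i hi => Nat.le_of_add_le_add_right ((hgap i hi).trans (hle.1.trans_eq hcard)))
      (fun i hi j hj => hsep i (by simp [hi]) j (by simp [hj]))
    obtain ⟨b, hb, hbmin⟩ := s.exists_min_image id hs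
    have hvb : v b = d * (s.card - 1) := by
      rw [hvs b hb, card_filter_lt_of_forall_le hb hbmin]
    -- The smallest index `b` of `s` is already as high as the bound allows for `s`, so a strict gap
    -- between `b` and `k` would push `k` beyond `d * s.card`.
    have hkb : k < b := by
      refine lt_of_not_ge fun hbk => ?_
      have := hle.1
      have := hgap b hb
      have := hsep b (by simp [hb]) k (by simp) (hbk.lt_of_ne (ne_of_mem_of_not_mem hb hks))
      omega
    have hk (i : ι) (hi : i ∈ s) : k < i := hkb.trans_le (hbmin i hi)
    have hvk : v k = d * s.card :=
      le_antisymm hle.1 (by simpa only [hvb, ← hcard] using hgap b hb)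
    rw [Finset.forall_mem_insert]
    constructor
    · rw [hvk, Finset.filter_insert, if_neg (lt_irrefl k), Finset.filter_true_of_mem hk]
    · intro i hi
      rw [hvs i hi, Finset.filter_insert, if_neg (hk i hi).not_gt]

variable [Fintype ι]

/-- Left endpoints of the tightest packing from `0` of half-open intervals of length `d`, one for
each element of `ι`, placed in decreasing order of their indices. -/
def rankPacking (ι : Type*) [LinearOrder ι] [Fintype ι] (d : ℕ) (i : ι) : ℕ :=
  d * Finset.card {j : ι | i < j}

lemma rankPacking_le (d : ℕ) (i : ι) : rankPacking ι d i ≤ d * (Fintype.card ι - 1) :=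
  Nat.mul_le_mul_left d <| Nat.le_sub_one_of_lt <|
    Finset.card_lt_univ_of_notMem (x := i) (by simp)

lemma rankPacking_add_le (d : ℕ) {i j : ι} (hij : i < j) :
    rankPacking ι d j + d ≤ rankPacking ι d i := by
  rw [rankPacking, rankPacking, ← Nat.mul_succ]
  refine Nat.mul_le_mul_left d (Finset.card_lt_card ?_)
  refine (Finset.ssubset_iff_of_subset fun k hk => ?_).mpr ⟨j, by simpa, by simp⟩
  simp only [Finset.mem_filter_univ] at hk ⊢
  exact hij.trans hk

lemma two_mul_card_filter_fst_lt_snd :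
    2 * Finset.card {k : ι × ι | k.1 < k.2} = Fintype.card ι * (Fintype.card ι - 1) := by
  have hswap : Finset.card {k : ι × ι | k.2 < k.1} = Finset.card {k : ι × ι | k.1 < k.2} :=
    Finset.card_equiv (Equiv.prodComm ι ι) (by simp)
  have hdisj : Disjoint ({k : ι × ι | k.1 < k.2} : Finset _) ({k : ι × ι | k.2 < k.1} : Finset _) :=
    Finset.disjoint_filter.mpr fun k _ => lt_asymm
  have hunion : ({k : ι × ι | k.1 < k.2} : Finset _) ∪ ({k : ι × ι | k.2 < k.1} : Finset _) =
      Finset.univ.offDiag := by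
    ext k
    simp [lt_or_lt_iff_ne]
  rw [two_mul]
  nth_rw 2 [← hswap]
  rw [← Finset.card_union_of_disjoint hdisj, hunion, Finset.offDiag_card, Finset.card_univ,
    Nat.mul_sub_one]

end RankPacking

section FactorialNeZero

open scoped Nat

lemma natCast_ne_zero_of_factorial_ne_zero {R : Type*} [CommSemiring R] {n : ℕ}
    (hn : (n ! : R) ≠ 0) {k : ℕ} (hk : 0 < k) (hkn : k ≤ n) : (k : R) ≠ 0 := fun h =>
  hn <| zero_dvd_iff.mp <| h ▸ Nat.cast_dvd_cast (Nat.dvd_factorial hk hkn)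

lemma natCast_injOn_of_factorial_ne_zero {R : Type*} [CommRing R] {n : ℕ} (hn : (n ! : R) ≠ 0) :
    Set.InjOn (Nat.cast : ℕ → R) (Set.Iic n) := by
  intro a ha b hb hab
  by_contra hne
  wlog hlt : a < b generalizing a b
  · exact this hb ha hab.symm (Ne.symm hne) (lt_of_le_of_ne (not_lt.mp hlt) (Ne.symm hne))
  refine natCast_ne_zero_of_factorial_ne_zero hn (Nat.sub_pos_of_lt hlt)
    ((Nat.sub_le b a).trans hb) ?_
  rw [Nat.cast_sub hlt.le, hab, sub_self]

end FactorialNeZero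

section PairDifference

open MvPolynomial
open scoped Nat

variable {ι R : Type*} [Fintype ι] [LinearOrder ι] [CommRing R]

/-- The polynomial `∏_{i < j} q i j (X i - X j)`, which over a domain is nonzero at exactly those
points none of whose differences `x i - x j` with `i < j` is a root of `q i j`. -/
noncomputable def pairDiffPolynomial (q : ι → ι → Polynomial R) : MvPolynomial ι R :=
  ∏ k : ι × ι with k.1 < k.2, Polynomial.aeval (X k.1 - X k.2) (q k.1 k.2)

lemma eval_pairDiffPolynomial_ne_zero_iff [IsDomain R] (q : ι → ι → Polynomial R) (x : ι → R) :
    eval x (pairDiffPolynomial q) ≠ 0 ↔ ∀ i j, i < j → (q i j).eval (x i - x j) ≠ 0 := by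
  simp [pairDiffPolynomial, eval_polynomial_aeval, Finset.prod_ne_zero_iff]

lemma isHomogeneous_X_sub_X {σ : Type*} (i j : σ) :
    (X i - X j : MvPolynomial σ R).IsHomogeneous 1 :=
  (isHomogeneous_X R i).sub (isHomogeneous_X R j)

variable {d : ℕ}

lemma sum_natDegree_filter_fst_lt_snd {q : ι → ι → Polynomial R}
    (hdeg : ∀ i j, i < j → (q i j).natDegree = 2 * d) :
    ∑ k : ι × ι with k.1 < k.2, (q k.1 k.2).natDegree =
      Fintype.card ι * (d * (Fintype.card ι - 1)) := by
  rw [Finset.sum_const_nat (m := 2 * d) fun k hk => hdeg _ _ (by simpa using hk)]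
  linear_combination d * two_mul_card_filter_fst_lt_snd (ι := ι)

lemma totalDegree_pairDiffPolynomial_le {q : ι → ι → Polynomial R}
    (hdeg : ∀ i j, i < j → (q i j).natDegree = 2 * d) :
    (pairDiffPolynomial q).totalDegree ≤ Fintype.card ι * (d * (Fintype.card ι - 1)) :=
  (totalDegree_prod_aeval_le _ (fun _ _ => (isHomogeneous_X_sub_X _ _).totalDegree_le) _).trans_eq
    (sum_natDegree_filter_fst_lt_snd hdeg)

lemma coeff_pairDiffPolynomial_eq {q r : ι → ι → Polynomial R}
    (hq : ∀ i j, i < j → (q i j).Monic) (hr : ∀ i j, i < j → (r i j).Monic)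
    (hqd : ∀ i j, i < j → (q i j).natDegree = 2 * d)
    (hrd : ∀ i j, i < j → (r i j).natDegree = 2 * d) {t : ι →₀ ℕ}
    (ht : t.degree = Fintype.card ι * (d * (Fintype.card ι - 1))) :
    coeff t (pairDiffPolynomial q) = coeff t (pairDiffPolynomial r) := by
  have hlin (k : ι × ι) : (X k.1 - X k.2 : MvPolynomial ι R).IsHomogeneous 1 :=
    isHomogeneous_X_sub_X _ _
  rw [pairDiffPolynomial, pairDiffPolynomial,
    coeff_prod_aeval _ (fun k _ => hlin k) (fun k hk => hq _ _ (by simpa using hk))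
      (ht.trans (sum_natDegree_filter_fst_lt_snd hqd).symm),
    coeff_prod_aeval _ (fun k _ => hlin k) (fun k hk => hr _ _ (by simpa using hk))
      (ht.trans (sum_natDegree_filter_fst_lt_snd hrd).symm)]
  congr 1
  refine Finset.prod_congr rfl fun k hk => ?_
  have hlt : k.1 < k.2 := by simpa using hk
  rw [hqd _ _ hlt, hrd _ _ hlt]

/-- The monic polynomial with roots `-d, …, d - 1`, the representative of degree `2 * d` for which
the top coefficient of `pairDiffPolynomial` is accessible. -/
noncomputable def centeredFactorial (R : Type*) [CommRing R] (d : ℕ) : Polynomial R :=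
  ∏ n ∈ Finset.Ico (-d : ℤ) d, (Polynomial.X - Polynomial.C (n : R))

lemma monic_centeredFactorial (d : ℕ) : (centeredFactorial R d).Monic :=
  Polynomial.monic_prod_X_sub_C _ _

lemma natDegree_centeredFactorial [Nontrivial R] (d : ℕ) :
    (centeredFactorial R d).natDegree = 2 * d := by
  rw [centeredFactorial, Polynomial.natDegree_finsetProd_X_sub_C_eq_card, Int.card_Ico]
  omega

lemma eval_centeredFactorial_ne_zero_iff [IsDomain R] (d : ℕ) (y : R) :
    (centeredFactorial R d).eval y ≠ 0 ↔ ∀ n : ℤ, -d ≤ n → n < d → y ≠ n := by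
  simp [centeredFactorial, Polynomial.eval_prod, Finset.prod_ne_zero_iff, sub_eq_zero]

variable [IsDomain R] (hd : ((Fintype.card ι * d)! : R) ≠ 0)

include hd in
lemma eval_rankPacking_ne_zero :
    eval (fun i => (rankPacking ι d i : R))
      (pairDiffPolynomial fun _ _ => centeredFactorial R d) ≠ 0 := by
  simp only [eval_pairDiffPolynomial_ne_zero_iff, eval_centeredFactorial_ne_zero_iff]
  intro i j hij n hn hnd heq
  have hgap := rankPacking_add_le d hij
  have hle := rankPacking_le d i
  have hcard : d * (Fintype.card ι - 1) + d = Fintype.card ι * d := by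
    rw [← Nat.mul_succ, Nat.succ_eq_add_one,
      Nat.sub_add_cancel (Fintype.card_pos_iff.mpr ⟨i⟩), mul_comm]
  obtain ⟨k, hk⟩ : ∃ k : ℕ, (k : ℤ) = rankPacking ι d i - rankPacking ι d j - n :=
    ⟨_, Int.toNat_of_nonneg (by omega)⟩
  refine natCast_ne_zero_of_factorial_ne_zero hd (k := k) (by omega) (by omega) ?_
  have hkR : (k : R) = rankPacking ι d i - rankPacking ι d j - n := by
    exact_mod_cast congrArg (Int.cast : ℤ → R) hk
  rw [hkR, heq, sub_self]

lemma eq_rankPacking_of_eval_ne_zero {v : ι → ℕ} (hv : ∀ i, v i ≤ d * (Fintype.card ι - 1))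
    (h : eval (fun i => (v i : R)) (pairDiffPolynomial fun _ _ => centeredFactorial R d) ≠ 0) :
    v = rankPacking ι d := by
  simp only [eval_pairDiffPolynomial_ne_zero_iff, eval_centeredFactorial_ne_zero_iff] at h
  funext i
  refine eq_mul_card_filter_lt d Finset.univ v (by simpa using hv) (fun i _ j _ hij => ?_) i
    (Finset.mem_univ i)
  by_contra! hlt
  exact h i j hij (v i - v j) (by omega) (by omega) (by push_cast; rfl)

include hd in
lemma coeff_pairDiffPolynomial_centeredFactorial_ne_zero {t : ι →₀ ℕ}
    (ht : ∀ i, t i = d * (Fintype.card ι - 1)) :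
    coeff t (pairDiffPolynomial fun _ _ => centeredFactorial R d) ≠ 0 := by
  classical
  have htdeg : t.degree = Fintype.card ι * (d * (Fintype.card ι - 1)) := by
    simp [Finsupp.degree_eq_sum, ht]
  let A : Finset R := (Finset.Iic (d * (Fintype.card ι - 1))).image Nat.cast
  have hcast : Set.InjOn (Nat.cast : ℕ → R) (Finset.Iic (d * (Fintype.card ι - 1))) :=
    (natCast_injOn_of_factorial_ne_zero hd).mono <| by
      rw [Finset.coe_Iic, Set.Iic_subset_Iic, mul_comm]
      exact Nat.mul_le_mul_right d (Nat.sub_le _ 1)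
  have hA : A.card = d * (Fintype.card ι - 1) + 1 := by
    rw [Finset.card_image_of_injOn hcast, Nat.card_Iic]
  refine coeff_ne_zero_of_eval_eq_zero_of_ne
    ((totalDegree_pairDiffPolynomial_le fun _ _ _ => natDegree_centeredFactorial d).trans_eq
      htdeg.symm)
    (A := fun _ => A) (fun i => by rw [ht, hA]; exact Nat.lt_succ_self _)
    (fun i => Finset.mem_image_of_mem _ (Finset.mem_Iic.mpr (rankPacking_le d i)))
    (eval_rankPacking_ne_zero hd) fun x hx hne => ?_
  by_contra hx0
  choose v hv hvx using fun i => Finset.mem_image.mp (hx i)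
  obtain rfl : (fun i => (v i : R)) = x := funext hvx
  exact hne (by rw [eq_rankPacking_of_eval_ne_zero (fun i => Finset.mem_Iic.mp (hv i)) hx0])

include hd in
lemma exists_forall_eval_sub_ne_zero {q : ι → ι → Polynomial R}
    (hq : ∀ i j, i < j → (q i j).Monic) (hdeg : ∀ i j, i < j → (q i j).natDegree = 2 * d)
    {A : ι → Finset R} (hA : ∀ i, d * (Fintype.card ι - 1) < (A i).card) :
    ∃ x : ι → R, (∀ i, x i ∈ A i) ∧ ∀ i j, i < j → (q i j).eval (x i - x j) ≠ 0 := by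
  let t : ι →₀ ℕ := Finsupp.equivFunOnFinite.symm fun _ => d * (Fintype.card ι - 1)
  have ht : t.degree = Fintype.card ι * (d * (Fintype.card ι - 1)) := by
    simp [t, Finsupp.degree_eq_sum]
  have hcoeff : coeff t (pairDiffPolynomial q) ≠ 0 := by
    rw [coeff_pairDiffPolynomial_eq hq (fun _ _ _ => monic_centeredFactorial d) hdeg
      (fun _ _ _ => natDegree_centeredFactorial d) ht]
    exact coeff_pairDiffPolynomial_centeredFactorial_ne_zero hd fun i => rfl
  obtain ⟨x, hxA, hx⟩ := combinatorial_nullstellensatz_exists_eval_nonzero _ t hcoeff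
    (((totalDegree_pairDiffPolynomial_le hdeg).trans_eq ht.symm).antisymm
      (le_totalDegree (mem_support_iff.mpr hcoeff))) A hA
  exact ⟨x, hxA, (eval_pairDiffPolynomial_ne_zero_iff q x).mp hx⟩

end PairDifference

lemma exists_monic_natDegree_eq_forall_eval_eq_zero {R : Type*} [CommRing R] [Nontrivial R]
    {s : Finset R} {n : ℕ} (hs : s.card ≤ n) :
    ∃ q : Polynomial R, q.Monic ∧ q.natDegree = n ∧ ∀ a ∈ s, q.eval a = 0 := by
  have hmonic : (∏ a ∈ s, (Polynomial.X - Polynomial.C a)).Monic :=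
    Polynomial.monic_prod_X_sub_C _ _
  refine ⟨Polynomial.X ^ (n - s.card) * ∏ a ∈ s, (Polynomial.X - Polynomial.C a),
    (Polynomial.monic_X_pow _).mul hmonic, ?_, fun a ha => ?_⟩
  · rw [(Polynomial.monic_X_pow _).natDegree_mul hmonic, Polynomial.natDegree_X_pow,
      Polynomial.natDegree_finsetProd_X_sub_C_eq_card,
      Nat.sub_add_cancel hs]
  · rw [Polynomial.eval_mul, Polynomial.eval_prod, Finset.prod_eq_zero ha (by simp), mul_zero]

open scoped Nat in
theorem packing_translates_Fp_general {ι R : Type*} [Fintype ι] [LinearOrder ι] [CommRing R]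
    [IsDomain R] [DecidableEq R] {d : ℕ} (hd : ((Fintype.card ι * d)! : R) ≠ 0)
    {X : ι → Finset R} (hX : ∀ i j, i < j → (X i - X j).card ≤ 2 * d) {A : ι → Finset R}
    (hA : ∀ i, d * (Fintype.card ι - 1) < (A i).card) :
    ∃ t : ι → R, (∀ i, t i ∈ A i) ∧ ∀ i j, i ≠ j →
      Disjoint ((X i).image (fun x => x + t i)) ((X j).image (fun x => x + t j)) := by
  have hroots (i j : ι) (hij : i < j) : ∃ q : Polynomial R,
      q.Monic ∧ q.natDegree = 2 * d ∧ ∀ a ∈ X j - X i, q.eval a = 0 :=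
    exists_monic_natDegree_eq_forall_eval_eq_zero <| by
      rw [← neg_sub, Finset.card_neg]
      exact hX i j hij
  choose! q hq hdeg hroot using hroots
  obtain ⟨t, htA, ht⟩ := exists_forall_eval_sub_ne_zero hd hq hdeg hA
  have hdisj (i j : ι) (hij : i < j) :
      Disjoint ((X i).image (fun x => x + t i)) ((X j).image (fun x => x + t j)) := by
    simp only [Finset.disjoint_left, Finset.mem_image]
    rintro _ ⟨x, hx, rfl⟩ ⟨y, hy, hxy⟩
    refine ht i j hij (hroot i j hij _ ?_)
    rw [show t i - t j = y - x by linear_combination -hxy]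
    exact Finset.sub_mem_sub hy hx
  exact ⟨t, htA, fun i j hij => hij.lt_or_gt.elim (hdisj i j) fun h => (hdisj j i h).symm⟩

/-- Packing translates in `F_p` when `m * d < p`. -/
theorem packing_translates_Fp (p : ℕ) (hp : p.Prime)
    (m d : ℕ) (hm : 0 < m) (hd : 0 < d) (hmd : m * d < p)
    (X : Fin m → Finset (ZMod p))
    (hX : ∀ i j : Fin m, i < j → (X i - X j).card ≤ 2 * d) :
    ∃ t : Fin m → ZMod p,
      ∀ i j, i ≠ j →
        Disjoint ((X i).image (fun x => x + t i))
          ((X j).image (fun x => x + t j)) := by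
  have : Fact p.Prime := ⟨hp⟩
  have hfact : ((Fintype.card (Fin m) * d).factorial : ZMod p) ≠ 0 := by
    rwa [Fintype.card_fin, Ne, ZMod.natCast_eq_zero_iff, hp.dvd_factorial, not_le]
  have hcard : d * (Fintype.card (Fin m) - 1) < (Finset.univ : Finset (ZMod p)).card := by
    rw [Finset.card_univ, ZMod.card, Fintype.card_fin, mul_comm]
    exact (Nat.mul_le_mul_right d (Nat.sub_le m 1)).trans_lt hmd
  obtain ⟨t, -, ht⟩ := packing_translates_Fp_general hfact hX fun _ => hcard
  exact ⟨t, ht⟩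
end

section
/- Let p be an odd prime, and let V be the F_p-vector space of dimension k. Denote V^* = V \ {0} and put m = |V^*|/2 = (p^k - 1)/2. Suppose we are given m linear bases of V: (v_{1,1}, ..., v_{1,k}), (v_{2,1}, ..., v_{2,k}), ..., (v_{m,1}, ..., v_{m,k}). Then there exist 2m pairwise distinct elements x_1, ..., x_m, y_1, ..., y_m ∈ V^* and a map g : {1,...,m} → {1,...,k} such that y_i - x_i = v_{i,g(i)} for every i = 1, ..., m. -/
/-!
Let `χᵢ` represent the nontrivial characters of `V` up to sign. For vectors `vᵢ` and unknown points
`xᵢ` consider the square matrix of the values of the characters `0, -χᵢ, χᵢ` at the points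
`0, xᵢ, xᵢ + vᵢ`: its determinant vanishes as soon as two of the points coincide. By orthogonality
of characters its sum over all `x` is `|V| ^ m` times the permanent of `χⱼ(vᵢ) - χⱼ(-vᵢ)`, so it
suffices to choose `vᵢ` in the `i`-th spanning set with a nonzero permanent. By multilinearity one
may replace each column by any linear combination over the `i`-th spanning set. With generic
coefficients, the entries of the combined matrix are `(ζ - ζ⁻¹) (βⱼ + π² eⱼᵢ)`, where `π = ζ - 1` is
the prime above `p` in the cyclotomic integers and `π ∤ βⱼ`. In the expansion of its permanent the
main term is `m! ∏ βⱼ`, and the terms involving `r ≥ 1` perturbations are divisible by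
`π ^ (2r) (m - r)!`, whose `π`-adic valuation exceeds that of `m!` because `2m + 1` is a power
of `p`.
-/

open Equiv Equiv.Perm Finset Matrix MvPolynomial

/-- The family consisting of `0` and of the pairs `x i`, `y i`, indexed by `Option (ι × Bool)`:
the index `none` stands for `0`, `some (i, false)` for `x i` and `some (i, true)` for `y i`.
It encodes both the points `0, xᵢ, yᵢ` of the partition and the characters `0, -χᵢ, χᵢ`. -/
def zeroPairs {ι M : Type*} [Zero M] (x y : ι → M) : Option (ι × Bool) → M :=
  fun c ↦ c.elim 0 fun ib ↦ bif ib.2 then y ib.1 else x ib.1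

/-- The involution of the index set of `zeroPairs` that exchanges the two members of each pair. -/
def mirror {ι : Type*} : Option (ι × Bool) → Option (ι × Bool) :=
  Option.map (Prod.map id not)

section Pairs

variable {ι M N : Type*}

lemma mirror_involutive : Function.Involutive (mirror : Option (ι × Bool) → _) := by
  rintro (_ | ⟨i, b⟩) <;> simp [mirror]

lemma zeroPairs_mirror [SubtractionMonoid M] (x : ι → M) (c : Option (ι × Bool)) :
    zeroPairs (-x) x (mirror c) = -zeroPairs (-x) x c := by
  rcases c with _ | ⟨i, _ | _⟩ <;> simp [mirror, zeroPairs]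

lemma map_zeroPairs {F : Type*} [Zero M] [Zero N] [FunLike F M N] [ZeroHomClass F M N] (f : F)
    (x y : ι → M) (c : Option (ι × Bool)) :
    f (zeroPairs x y c) = zeroPairs (f ∘ x) (f ∘ y) c := by
  rcases c with _ | ⟨i, _ | _⟩ <;> simp [zeroPairs]

lemma injective_zeroPairs_iff [Zero M] {x y : ι → M} :
    Function.Injective (zeroPairs x y) ↔
      (∀ i, x i ≠ 0) ∧ (∀ i, y i ≠ 0) ∧ Function.Injective (Sum.elim x y) := by
  constructor
  · intro h
    refine ⟨fun i hi ↦ ?_, fun i hi ↦ ?_, ?_⟩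
    · simpa using @h (some (i, false)) none hi
    · simpa using @h (some (i, true)) none hi
    · have hxy : Sum.elim x y = zeroPairs x y ∘ some ∘ Sum.elim (·, false) (·, true) := by
        ext (i | i) <;> rfl
      rw [hxy]
      refine h.comp ((Option.some_injective _).comp ?_)
      rintro (i | i) (j | j) hij <;> simp_all
  · rintro ⟨hx, hy, hxy⟩ (_ | ⟨i, _ | _⟩) (_ | ⟨j, _ | _⟩) hij
    · rfl
    · exact absurd hij.symm (hx j)
    · exact absurd hij.symm (hy j)
    · exact absurd hij (hx i)
    · simpa using @hxy (.inl i) (.inl j) hij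
    · simpa using @hxy (.inl i) (.inr j) hij
    · exact absurd hij (hy i)
    · simpa using @hxy (.inr i) (.inl j) hij
    · simpa using @hxy (.inr i) (.inr j) hij

lemma eq_zero_of_neg_eq_of_odd_card {G : Type*} [AddGroup G] (hG : Odd (Nat.card G)) {c : G}
    (hc : -c = c) : c = 0 := by
  have h2 : Nat.Coprime (Nat.card G) 2 := Nat.coprime_two_right.2 hG
  exact (nsmulCoprime h2).injective (by simp [two_nsmul, ← eq_neg_iff_add_eq_zero, hc])

lemma exists_bijective_zeroPairs {G : Type*} [AddGroup G] [Finite G] [Fintype ι]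
    (hG : Nat.card G = 2 * Fintype.card ι + 1) :
    ∃ f : ι → G, Function.Bijective (zeroPairs (-f) f) := by
  classical
  have := Fintype.ofFinite G
  -- Keep from each pair `±c` the element that comes first in an enumeration of the group.
  let e := Finite.equivFin G
  let T := {c : G // e c < e (-c)}
  let F : Option (T × Bool) → G := zeroPairs (-(↑)) (↑)
  have hF : Function.Bijective F := by
    refine ⟨injective_zeroPairs_iff.2 ⟨?_, ?_, ?_⟩, fun c ↦ ?_⟩
    · rintro ⟨c, hc⟩ h0
      obtain rfl : c = 0 := neg_eq_zero.1 h0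
      simp at hc
    · rintro ⟨c, hc⟩ h0
      obtain rfl : c = 0 := h0
      simp at hc
    · refine Function.Injective.sumElim (neg_injective.comp Subtype.val_injective)
        Subtype.val_injective ?_
      rintro ⟨c, hc⟩ ⟨d, hd⟩ h
      obtain rfl : -c = d := h
      exact lt_asymm hc (by simpa using hd)
    · rcases lt_trichotomy (e c) (e (-c)) with h | h | h
      · exact ⟨some (⟨c, h⟩, true), rfl⟩
      · exact ⟨none, (eq_zero_of_neg_eq_of_odd_card ⟨_, hG⟩ (e.injective h).symm).symm⟩
      · exact ⟨some (⟨-c, by rwa [neg_neg]⟩, false), neg_neg c⟩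
  have hcard : Fintype.card ι = Fintype.card T := by
    have hT := Nat.card_eq_of_bijective F hF
    rw [hG, Nat.card_eq_fintype_card, Fintype.card_option, Fintype.card_prod,
      Fintype.card_bool] at hT
    omega
  let g : ι ≃ T := Fintype.equivOfCardEq hcard
  refine ⟨fun i ↦ g i, ?_⟩
  convert hF.comp (optionCongr (prodCongr g (Equiv.refl Bool))).bijective using 1
  ext (_ | ⟨i, _ | _⟩) <;> rfl

end Pairs

section SignedPerm

/-- The permutation of the index set of `zeroPairs` that moves the pairs by `τ` and, while moving
the `i`-th pair, permutes its two members by `ε i`. -/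
def signedPerm {ι : Type*} (τ : Perm ι) (ε : ι → Perm Bool) : Perm (Option (ι × Bool)) :=
  optionCongr (prodCongrLeft (fun _ ↦ τ) * prodCongrRight ε)

variable {ι D : Type*}

lemma signedPerm_some (τ : Perm ι) (ε : ι → Perm Bool) (i : ι) (b : Bool) :
    signedPerm τ ε (some (i, b)) = some (τ i, ε i b) := rfl

lemma mirror_signedPerm (τ : Perm ι) (ε : ι → Perm Bool) (i : ι) :
    mirror (signedPerm τ ε (some (i, false))) = signedPerm τ ε (some (i, true)) := by
  have h : ∀ s : Perm Bool, (!s false) = s true := by decide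
  simp [signedPerm_some, mirror, h]

lemma signedPerm_injective :
    Function.Injective fun t : Perm ι × (ι → Perm Bool) ↦ signedPerm t.1 t.2 := by
  rintro ⟨τ, ε⟩ ⟨τ', ε'⟩ h
  have key : ∀ i b, τ i = τ' i ∧ ε i b = ε' i b := fun i b ↦ by
    simpa [signedPerm_some] using congr($h (some (i, b)))
  ext i b
  exacts [(key i true).1, (key i b).2]

lemma sign_signedPerm [Fintype ι] [DecidableEq ι] (τ : Perm ι) (ε : ι → Perm Bool) :
    sign (signedPerm τ ε) = ∏ i, sign (ε i) := by
  rw [signedPerm, optionCongr_sign, Perm.sign_mul, sign_prodCongrLeft, sign_prodCongrRight,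
    Fintype.prod_bool, Int.units_mul_self, one_mul]

lemma exists_signedPerm_eq [Finite ι] (σ : Perm (Option (ι × Bool)))
    (hσ : ∀ i, σ (some (i, true)) = mirror (σ (some (i, false)))) :
    ∃ τ ε, signedPerm τ ε = σ := by
  have hnot : ∀ i b, σ (some (i, !b)) = mirror (σ (some (i, b))) := by
    rintro i (_ | _)
    · exact hσ i
    · exact (mirror_involutive _).symm.trans congr(mirror $((hσ i).symm))
  have hnone : ∀ i b, σ (some (i, b)) ≠ none := fun i b h ↦ by
    have h' : σ (some (i, !b)) = none := by rw [hnot, h]; rfl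
    simpa using σ.injective (h.trans h'.symm)
  choose t ht using fun i ↦ Option.ne_none_iff_exists'.1 (hnone i false)
  have hpair : ∀ i b, σ (some (i, b)) = some ((t i).1, xor b (t i).2) := by
    rintro i (_ | _)
    · simp [ht]
    · simp [hσ, ht, mirror]
      rfl
  have hinj : Function.Injective fun i ↦ (t i).1 := fun i j hij ↦ by
    have h : σ (some (i, (t i).2)) = σ (some (j, (t j).2)) := by simpa [hpair] using hij
    exact congr($(Option.some.inj (σ.injective h)).1)
  refine ⟨.ofBijective _ (Finite.injective_iff_bijective.1 hinj),
    fun i ↦ if (t i).2 then boolNot else 1, Equiv.ext ?_⟩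
  rintro (_ | ⟨i, b⟩)
  · obtain ⟨_ | ⟨i, b⟩, hc⟩ := σ.surjective none
    · exact hc.symm
    · exact absurd hc (hnone i b)
  · rw [signedPerm_some, hpair]
    cases (t i).2 <;> simp

variable [CommRing D]

lemma sum_perm_bool (f : Bool → D) :
    ∑ s : Perm Bool, ((sign s : ℤ) : D) * f (s true) = f true - f false := by
  have huniv : (univ : Finset (Perm Bool)) = {1, swap false true} := by decide
  rw [huniv, sum_pair (by decide), sign_swap (by decide)]
  simp [sub_eq_add_neg]

lemma sum_sign_mul_prod_ite_mirror [Fintype ι] [DecidableEq ι] (w : Option (ι × Bool) → ι → D) :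
    ∑ σ : Perm (Option (ι × Bool)), ((sign σ : ℤ) : D) *
      ∏ i, (if mirror (σ (some (i, false))) = σ (some (i, true)) then
        w (σ (some (i, true))) i else 0) =
    permanent (.of fun j i ↦ w (some (j, true)) i - w (some (j, false)) i) := by
  -- Only the signed permutations survive, and summing over the signs produces the differences.
  rw [← Fintype.sum_of_injective _ signedPerm_injective
    (fun t ↦ ∏ i, ((sign (t.2 i) : ℤ) : D) * w (some (t.1 i, t.2 i true)) i)]
  · rw [Fintype.sum_prod_type, permanent]
    refine sum_congr rfl fun τ _ ↦ ?_
    have hdiff : ∀ i, w (some (τ i, true)) i - w (some (τ i, false)) i =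
        ∑ s : Perm Bool, ((sign s : ℤ) : D) * w (some (τ i, s true)) i :=
      fun i ↦ (sum_perm_bool fun b ↦ w (some (τ i, b)) i).symm
    simp_rw [of_apply, hdiff]
    rw [prod_univ_sum, Fintype.piFinset_univ]
  · intro σ hσ
    obtain ⟨i, hi⟩ : ∃ i, mirror (σ (some (i, false))) ≠ σ (some (i, true)) := by
      by_contra! h
      obtain ⟨τ, ε, rfl⟩ := exists_signedPerm_eq σ fun i ↦ (h i).symm
      exact hσ ⟨(τ, ε), rfl⟩
    rw [prod_eq_zero (mem_univ i) (if_neg hi), mul_zero]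
  · rintro ⟨τ, ε⟩
    simp only [sign_signedPerm, mirror_signedPerm, if_true, prod_mul_distrib]
    push_cast
    rfl

end SignedPerm

section Characters

variable {ι V D : Type*} [Fintype ι] [DecidableEq ι] [AddCommGroup V] [Fintype V]
  [CommRing D] [IsDomain D] {χ : ι → AddChar V D}

lemma sum_mul_shift_eq_ite (φ φ' : AddChar V D) (v : V) [Decidable (-φ = φ')] :
    ∑ x, φ x * φ' (x + v) = if -φ = φ' then (Fintype.card V : D) * φ' v else 0 := by
  classical
  have h : ∀ x, φ x * φ' (x + v) = (φ + φ') x * φ' v := fun x ↦ by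
    rw [AddChar.map_add_eq_mul, AddChar.add_apply, mul_assoc]
  simp_rw [h, ← sum_mul, AddChar.sum_eq_ite, ite_mul, zero_mul, neg_eq_iff_add_eq_zero]

lemma sum_det_zeroPairs (hχ : Function.Injective (zeroPairs (-χ) χ)) (v : ι → V) :
    ∑ x : ι → V, det (.of fun r c ↦ zeroPairs (-χ) χ r (zeroPairs x (x + v) c)) =
      (Fintype.card V : D) ^ Fintype.card ι *
        permanent (.of fun j i ↦ χ j (v i) - χ j (-v i)) := by
  let w : Option (ι × Bool) → ι → D :=
    fun r i ↦ (Fintype.card V : D) * zeroPairs (-χ) χ r (v i)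
  have hpair : ∀ r r' i, ∑ x, zeroPairs (-χ) χ r x * zeroPairs (-χ) χ r' (x + v i) =
      if mirror r = r' then w r' i else 0 := fun r r' i ↦ by
    rw [sum_mul_shift_eq_ite]
    simp_rw [← zeroPairs_mirror, hχ.eq_iff, w]
  have hw : (of fun j i ↦ w (some (j, true)) i - w (some (j, false)) i) =
      (Fintype.card V : D) • of fun j i ↦ χ j (v i) - χ j (-v i) := by
    ext j i
    simp [w, zeroPairs, mul_sub]
  rw [← permanent_smul, ← hw, ← sum_sign_mul_prod_ite_mirror]
  simp_rw [det_apply', ← hpair]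
  rw [sum_comm]
  refine sum_congr rfl fun σ _ ↦ ?_
  rw [← mul_sum, prod_univ_sum, Fintype.piFinset_univ]
  congr 1
  refine sum_congr rfl fun x _ ↦ ?_
  simp [Fintype.prod_option, Fintype.prod_prod_type, zeroPairs, mul_comm]

lemma exists_injective_zeroPairs_of_permanent_ne_zero (hV : (Fintype.card V : D) ≠ 0)
    (hχ : Function.Injective (zeroPairs (-χ) χ)) (v : ι → V)
    (hper : permanent (.of fun j i ↦ χ j (v i) - χ j (-v i)) ≠ 0) :
    ∃ x : ι → V, Function.Injective (zeroPairs x (x + v)) := by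
  by_contra! hx
  refine mul_ne_zero (pow_ne_zero (Fintype.card ι) hV) hper ?_
  rw [← sum_det_zeroPairs hχ v]
  refine sum_eq_zero fun x _ ↦ ?_
  obtain ⟨c, d, hcd, hne⟩ := Function.not_injective_iff.1 (hx x)
  exact det_zero_of_column_eq hne fun r ↦ by simp only [of_apply, hcd]

end Characters

section Permanent

variable {ι D : Type*} [Fintype ι] [DecidableEq ι]

lemma natCard_dvd_sum_of_mul_right_invariant [Semiring D] {G : Type*} [Group G] [Fintype G]
    (H : Subgroup G) {f : G → D} (hf : ∀ g, ∀ h ∈ H, f (g * h) = f g) :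
    (Nat.card H : D) ∣ ∑ g, f g := by
  classical
  have hout : ∀ g : G, f g = f (g : G ⧸ H).out := fun g ↦ by
    obtain ⟨h, hh⟩ := QuotientGroup.mk_out_eq_mul H g
    rw [hh, hf g h h.2]
  rw [Fintype.sum_equiv Subgroup.groupEquivQuotientProdSubgroup f
    (fun c : (G ⧸ H) × H ↦ f c.1.out) hout, Fintype.sum_prod_type]
  simp [← mul_sum]

lemma factorial_dvd_sum_perm [Semiring D] (R : Finset ι) {f : Perm ι → D}
    (hf : ∀ σ τ : Perm ι, (∀ i ∈ R, τ i = i) → f (σ * τ) = f σ) :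
    ((Fintype.card ι - #R).factorial : D) ∣ ∑ σ, f σ := by
  let H := (ofSubtype (p := (· ∉ R))).range
  have hH : Nat.card H = (Fintype.card ι - #R).factorial := by
    rw [Nat.card_congr (MonoidHom.ofInjective ofSubtype_injective).symm.toEquiv, Nat.card_perm,
      Nat.card_eq_fintype_card, Fintype.card_subtype_compl, Fintype.card_coe]
  rw [← hH]
  refine natCard_dvd_sum_of_mul_right_invariant H ?_
  rintro σ _ ⟨τ, rfl⟩
  exact hf _ _ fun i hi ↦ ofSubtype_apply_of_not_mem τ (not_not.2 hi)

variable [CommSemiring D]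

lemma permanent_const_add (β : ι → D) (E : ι → ι → D) :
    permanent (.of fun j i ↦ β j + E j i) =
      ∑ R : Finset ι, ∑ σ : Perm ι, (∏ i ∈ R, E (σ i) i) * ∏ i ∈ Rᶜ, β (σ i) := by
  rw [sum_comm, permanent]
  simp_rw [of_apply, add_comm (β _), Fintype.prod_add]

lemma factorial_dvd_sum_prod_mul_prod_compl (β : ι → D) (E : ι → ι → D) (R : Finset ι) :
    ((Fintype.card ι - #R).factorial : D) ∣
      ∑ σ : Perm ι, (∏ i ∈ R, E (σ i) i) * ∏ i ∈ Rᶜ, β (σ i) := by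
  refine factorial_dvd_sum_perm R fun σ τ hτ ↦ ?_
  have hmaps : ∀ i, i ∈ Rᶜ ↔ τ i ∈ Rᶜ := fun i ↦ by
    simp only [mem_compl, not_iff_not]
    refine ⟨fun hi ↦ by rwa [hτ i hi], fun hi ↦ ?_⟩
    rwa [τ.injective (hτ _ hi)] at hi
  congr 1
  · exact prod_congr rfl fun i hi ↦ by rw [mul_apply, hτ i hi]
  · exact prod_equiv τ hmaps fun i _ ↦ rfl

lemma exists_mem_permanent_ne_zero {V : Type*} (S : ι → Finset V) (A c : ι → V → D)
    (h : permanent (.of fun j i ↦ ∑ s ∈ S i, A j s * c i s) ≠ 0) :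
    ∃ d : ι → V, (∀ i, d i ∈ S i) ∧ permanent (.of fun j i ↦ A j (d i)) ≠ 0 := by
  classical
  by_contra! hd
  refine h ?_
  simp_rw [permanent, of_apply, prod_univ_sum]
  rw [sum_comm]
  refine sum_eq_zero fun d hdS ↦ ?_
  simp_rw [prod_mul_distrib, ← sum_mul]
  exact mul_eq_zero_of_left (hd d (Fintype.mem_piFinset.1 hdS)) _

end Permanent

section Valuation

lemma padicValNat_factorial_le_add {p k m r : ℕ} [hp : Fact p.Prime] (hm : 2 * m + 1 = p ^ k)
    (hr : r ≤ m) :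
    padicValNat p m.factorial ≤
      padicValNat p (m - r).factorial + padicValNat p (2 * r).factorial := by
  induction r with
  | zero => simp
  | succ r ih =>
    obtain ⟨t, ht⟩ : ∃ t, m = r + t + 1 := ⟨m - r - 1, by omega⟩
    have hle : padicValNat p (t + 1) ≤ padicValNat p (2 * r + 1) := by
      -- `2 * (t + 1)` and `-(2 * r + 1)` are congruent modulo `p ^ k`.
      have hdvd : p ^ padicValNat p (t + 1) ∣ t + 1 := pow_padicValNat_dvd
      have hk : padicValNat p (t + 1) ≤ k := by
        rw [← Nat.pow_le_pow_iff_right hp.out.one_lt]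
        exact (Nat.le_of_dvd t.succ_pos hdvd).trans (by omega)
      rw [← padicValNat_dvd_iff_le (by omega), ← Nat.dvd_add_right (hdvd.mul_left 2),
        show 2 * (t + 1) + (2 * r + 1) = p ^ k by omega]
      exact pow_dvd_pow p hk
    have ih := ih (by omega)
    rw [show m - r = t + 1 by omega, Nat.factorial_succ,
      padicValNat.mul (by positivity) (by positivity)] at ih
    rw [show m - (r + 1) = t by omega, show 2 * (r + 1) = 2 * r + 1 + 1 by ring,
      Nat.factorial_succ, Nat.factorial_succ, padicValNat.mul (by positivity) (by positivity),
      padicValNat.mul (by positivity) (by positivity)]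
    omega

lemma sub_one_mul_padicValNat_factorial_lt_add {p k m r : ℕ} [Fact p.Prime]
    (hm : 2 * m + 1 = p ^ k) (hr0 : r ≠ 0) (hr : r ≤ m) :
    (p - 1) * padicValNat p m.factorial <
      2 * r + (p - 1) * padicValNat p (m - r).factorial := by
  have hle := Nat.mul_le_mul_left (p - 1) (padicValNat_factorial_le_add hm hr)
  have hlt := sub_one_mul_padicValNat_factorial_lt_of_ne_zero p
    (mul_ne_zero two_ne_zero hr0)
  rw [mul_add] at hle
  omega

variable {D : Type*} [CommRing D] {p : ℕ} {π : D}

lemma dvd_natCast_iff_of_associated_pow [hp : Fact p.Prime] (hπ : Prime π)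
    (h : Associated (π ^ (p - 1)) (p : D)) (n : ℕ) : π ∣ n ↔ p ∣ n := by
  have hπp : π ∣ p := (dvd_pow_self π (Nat.sub_ne_zero_of_lt hp.out.one_lt)).trans h.dvd
  refine ⟨fun hn ↦ ?_, fun hn ↦ hπp.trans (Nat.cast_dvd_cast hn)⟩
  by_contra hpn
  refine hπ.not_isUnit (isUnit_of_dvd_one ?_)
  have hcop := Nat.isCoprime_iff_coprime.2 ((Nat.Prime.coprime_iff_not_dvd hp.out).2 hpn)
  obtain ⟨a, b, hab⟩ := hcop.map (Int.castRingHom D)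
  rw [← hab]
  exact dvd_add ((by simpa using hπp : π ∣ _).mul_left _) ((by simpa using hn : π ∣ _).mul_left _)

lemma pow_dvd_natCast_iff_of_associated_pow [IsDomain D] [hp : Fact p.Prime] (hπ : Prime π)
    (h : Associated (π ^ (p - 1)) (p : D)) {n : ℕ} (hn : n ≠ 0) (j : ℕ) :
    π ^ j ∣ n ↔ j ≤ (p - 1) * padicValNat p n := by
  obtain ⟨e, c, hc, rfl⟩ := Nat.exists_eq_pow_mul_and_not_dvd hn p hp.out.ne_one
  have hassoc : Associated ((p ^ e * c : ℕ) : D) (π ^ ((p - 1) * e) * c) := by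
    push_cast
    rw [pow_mul]
    exact (h.symm.pow_pow).mul_right _
  have hval : padicValNat p (p ^ e * c) = e := by
    rw [padicValNat.mul (pow_ne_zero _ hp.out.ne_zero) (right_ne_zero_of_mul hn),
      padicValNat.prime_pow, padicValNat.eq_zero_of_not_dvd hc, add_zero]
  rw [hassoc.dvd_iff_dvd_right, hval]
  have hπc : ¬π ∣ c := (dvd_natCast_iff_of_associated_pow hπ h c).not.2 hc
  rw [← pow_dvd_pow_iff hπ.ne_zero hπ.not_isUnit]
  exact ⟨hπ.pow_dvd_of_dvd_mul_right j hπc, fun hj ↦ hj.mul_right _⟩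

lemma permanent_ne_zero_of_sq_dvd_sub [IsDomain D] [Fact p.Prime] (hπ : Prime π)
    (h : Associated (π ^ (p - 1)) (p : D)) {ι : Type*} [Fintype ι] [DecidableEq ι] {k : ℕ}
    (hk : 2 * Fintype.card ι + 1 = p ^ k) {M : Matrix ι ι D} {β : ι → D} (hβ : ∀ j, ¬π ∣ β j)
    (hM : ∀ j i, π ^ 2 ∣ M j i - β j) : M.permanent ≠ 0 := by
  intro h0
  choose E hE using hM
  let T (R : Finset ι) : D := ∑ σ : Perm ι, (∏ i ∈ R, π ^ 2 * E (σ i) i) * ∏ i ∈ Rᶜ, β (σ i)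
  let J := (p - 1) * padicValNat p (Fintype.card ι).factorial + 1
  have hT0 : T ∅ = (Fintype.card ι).factorial * ∏ j, β j := by
    simp [T, Equiv.prod_comp, Fintype.card_perm]
  have hT : ∀ R ≠ ∅, π ^ J ∣ T R := fun R hR ↦ by
    have hJ : π ^ J ∣ π ^ (2 * #R) * ((Fintype.card ι - #R).factorial : D) := by
      refine (pow_dvd_pow π (sub_one_mul_padicValNat_factorial_lt_add hk (r := #R) (by simpa)
        (card_le_univ R))).trans ?_
      rw [pow_add]
      exact mul_dvd_mul_left _
        ((pow_dvd_natCast_iff_of_associated_pow hπ h (Nat.factorial_ne_zero _) _).2 le_rfl)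
    refine hJ.trans ?_
    simp_rw [T, prod_mul_distrib, prod_const, ← pow_mul, mul_assoc, ← mul_sum]
    exact mul_dvd_mul_left _ (factorial_dvd_sum_prod_mul_prod_compl β E R)
  have hsum : ∑ R, T R = 0 := by
    rw [← h0, ← permanent_const_add β fun j i ↦ π ^ 2 * E j i]
    congr 1
    ext j i
    simp [← hE]
  have hJ : π ^ J ∣ (Fintype.card ι).factorial * ∏ j, β j := by
    rw [← hT0, ← dvd_add_left (dvd_sum fun R hR ↦ hT R (ne_of_mem_erase hR)),
      add_sum_erase _ _ (mem_univ ∅), hsum]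
    exact dvd_zero _
  have hβprod : ¬π ∣ ∏ j, β j := hπ.dvd_finsetProd_iff _ |>.not.2 (by simpa using hβ)
  have := (pow_dvd_natCast_iff_of_associated_pow hπ h (Nat.factorial_ne_zero _) _).1
    (hπ.pow_dvd_of_dvd_mul_right _ hβprod hJ)
  omega

lemma permanent_ne_zero_of_sq_mul_dvd_sub [IsDomain D] [Fact p.Prime] (hπ : Prime π)
    (h : Associated (π ^ (p - 1)) (p : D)) {ι : Type*} [Fintype ι] [DecidableEq ι] {k : ℕ}
    (hk : 2 * Fintype.card ι + 1 = p ^ k) {M : Matrix ι ι D} {c : D} (hc : c ≠ 0) {β : ι → D}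
    (hβ : ∀ j, ¬π ∣ β j) (hM : ∀ j i, π ^ 2 * c ∣ M j i - c * β j) : M.permanent ≠ 0 := by
  choose E hE using hM
  have hMc : M = c • .of fun j i ↦ β j + π ^ 2 * E j i := by
    ext j i
    rw [eq_add_of_sub_eq (hE j i), Matrix.smul_apply, of_apply, smul_eq_mul]
    ring
  rw [hMc, permanent_smul]
  exact mul_ne_zero (pow_ne_zero _ hc)
    (permanent_ne_zero_of_sq_dvd_sub hπ h hk hβ fun j i ↦ by simp)

end Valuation

section LinearLift

variable {κ R : Type*} [CommRing R] {p : ℕ}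

lemma natCast_dvd_natCast_sub_natCast {m n : ℕ} (h : (m : ZMod p) = n) :
    (p : R) ∣ (m : R) - n := by
  have h' : (p : ℤ) ∣ (m : ℤ) - n :=
    (ZMod.intCast_zmod_eq_zero_iff_dvd _ p).1 (by push_cast; rw [h, sub_self])
  simpa using map_dvd (Int.castRingHom R) h'

variable [Fintype κ]

/-- A lift to characteristic zero of the linear form `∑ s, a s * X s` over `ZMod p`: each
coefficient is replaced by its representative in `{0, …, p - 1}`. -/
noncomputable def linearLift (R : Type*) [CommRing R] (a : κ → ZMod p) : MvPolynomial κ R :=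
  ∑ s, ((a s).val : MvPolynomial κ R) * X s

lemma coeff_linearLift (a : κ → ZMod p) (s : κ) :
    (linearLift R a).coeff (Finsupp.single s 1) = (a s).val := by
  classical
  simp_rw [linearLift, coeff_sum, ← map_natCast (C : R →+* MvPolynomial κ R), coeff_C_mul,
    coeff_X]
  simp [Finsupp.single_left_inj]

lemma eq_zero_of_C_dvd_linearLift [NeZero p] {π : R} (hπ : ∀ n : ℕ, π ∣ (n : R) → p ∣ n)
    {a : κ → ZMod p} (h : C π ∣ linearLift R a) : a = 0 := by
  ext s
  have hs := (C_dvd_iff_dvd_coeff π _).1 h (Finsupp.single s 1)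
  rw [coeff_linearLift] at hs
  rw [← ZMod.natCast_zmod_val (a s)]
  exact (ZMod.natCast_eq_zero_iff _ _).2 (hπ _ hs)

lemma natCast_dvd_sum_linearLift_mul_sub [NeZero p] {V : Type*} (S : Finset V)
    (a : V → κ → ZMod p) (c : V → ZMod p) :
    (p : MvPolynomial κ R) ∣
      ∑ t ∈ S, linearLift R (a t) * ((c t).val : MvPolynomial κ R) -
        linearLift R (∑ t ∈ S, c t • a t) := by
  simp_rw [linearLift, sum_mul]
  rw [sum_comm, ← sum_sub_distrib]
  refine dvd_sum fun s _ ↦ ?_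
  have h : ∑ t ∈ S, ((a t s).val : MvPolynomial κ R) * X s * ((c t).val : MvPolynomial κ R) =
      ((∑ t ∈ S, (a t s).val * (c t).val : ℕ) : MvPolynomial κ R) * X s := by
    push_cast
    rw [sum_mul]
    exact sum_congr rfl fun t _ ↦ mul_right_comm _ _ _
  rw [h, ← sub_mul]
  refine (natCast_dvd_natCast_sub_natCast ?_).mul_right _
  simp [mul_comm]

end LinearLift

lemma sq_mul_dvd_pow_sub_pow_sub {D : Type*} [CommRing D] {z y : D} (hzy : z * y = 1) (n : ℕ) :
    (z - 1) ^ 2 * (z - y) ∣ z ^ n - y ^ n - n * (z - y) := by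
  induction n using Nat.twoStepInduction with
  | zero => simp
  | one => simp
  | more n ih ih₁ =>
    -- `u n = z ^ n - y ^ n` satisfies `u (n + 2) = (z + y) * u (n + 1) - u n`, and `z + y` is
    -- congruent to `2` modulo `(z - 1) ^ 2`.
    have h : z ^ (n + 2) - y ^ (n + 2) - ((n + 2 : ℕ) : D) * (z - y) =
        2 * (z ^ (n + 1) - y ^ (n + 1) - ((n + 1 : ℕ) : D) * (z - y)) -
          (z ^ n - y ^ n - n * (z - y)) + (z + y - 2) * (z ^ (n + 1) - y ^ (n + 1)) := by
      push_cast
      linear_combination (y ^ n - z ^ n) * hzy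
    have h2 : z + y - 2 = y * (z - 1) ^ 2 := by linear_combination (2 - z) * hzy
    rw [h, h2, mul_assoc]
    exact dvd_add (dvd_sub (ih₁.mul_left 2) ih)
      ((mul_dvd_mul_left _ (sub_dvd_pow_sub_pow z y _)).mul_left y)

section Assembly

variable {p : ℕ} {V D R : Type*} [AddCommGroup V] [Module (ZMod p) V] [CommRing D] [CommRing R]

/-- The characters `v ↦ z ^ f v` attached to the linear forms `f` on `V`, for a `p`-th root of
unity `z`. -/
noncomputable def dualChar [NeZero p] {z : D} (hz : z ^ p = 1) :
    Module.Dual (ZMod p) V →+ AddChar V D where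
  toFun f := (AddChar.zmodChar p hz).compAddMonoidHom f.toAddMonoidHom
  map_zero' := by ext; simp
  map_add' f g := by ext; simp [AddChar.map_add_eq_mul]

lemma dualChar_apply [NeZero p] {z : D} (hz : z ^ p = 1) (f : Module.Dual (ZMod p) V) (v : V) :
    dualChar hz f v = z ^ (f v).val := rfl

lemma dualChar_apply_neg [NeZero p] {z y : D} (hz : z ^ p = 1) (hzy : z * y = 1)
    (f : Module.Dual (ZMod p) V) (v : V) : dualChar hz f (-v) = y ^ (f v).val := by
  refine left_inv_eq_right_inv (a := dualChar hz f v) ?_ ?_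
  · rw [← AddChar.map_add_eq_mul, neg_add_cancel, AddChar.map_zero_eq_one]
  · rw [dualChar_apply, ← mul_pow, hzy, one_pow]

lemma dualChar_injective [NeZero p] {z : D} (hz : IsPrimitiveRoot z p) :
    Function.Injective (dualChar hz.pow_eq_one : Module.Dual (ZMod p) V →+ AddChar V D) := by
  intro f g hfg
  ext v
  refine ZMod.val_injective p (hz.pow_inj (ZMod.val_lt _) (ZMod.val_lt _) ?_)
  simpa only [dualChar_apply] using congr($hfg v)

lemma sub_ne_zero_of_isPrimitiveRoot_of_odd (hodd : Odd p) (hp : p ≠ 1) {z y : D}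
    (hz : IsPrimitiveRoot z p) (hzy : z * y = 1) : z - y ≠ 0 := by
  intro h
  have h2 : p ∣ 2 := (hz.pow_eq_one_iff_dvd 2).1 (by linear_combination z * h + hzy)
  exact hp (Nat.eq_one_of_dvd_coprimes hodd.coprime_two_right dvd_rfl h2)

lemma sum_apply_smul_coeff {S : Finset V} {a : V → V → ZMod p}
    (ha : ∀ u, ∑ t ∈ S, a u t • t = u) (f : Module.Dual (ZMod p) V) :
    ∑ t ∈ S, f t • (a · t) = f := by
  ext u
  conv_rhs => rw [← ha u]
  simp [mul_comm]

/-- This makes the rows of the combined matrix constant modulo `(z - 1) ^ 2`: the approximation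
`(z - y) * linearLift R f` does not depend on `S`. -/
lemma sq_mul_dvd_sum_dualChar_sub_mul_linearLift [NeZero p] [Fintype V] {z y : MvPolynomial V R}
    (hz : z ^ p = 1) (hzy : z * y = 1) (hdvd : (z - 1) ^ 2 ∣ (p : MvPolynomial V R))
    {S : Finset V} {a : V → V → ZMod p} (ha : ∀ u, ∑ t ∈ S, a u t • t = u)
    (f : Module.Dual (ZMod p) V) :
    (z - 1) ^ 2 * (z - y) ∣
      ∑ t ∈ S, (dualChar hz f t - dualChar hz f (-t)) * linearLift R (a · t) -
        (z - y) * linearLift R f := by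
  have hsum : ∑ t ∈ S, (dualChar hz f t - dualChar hz f (-t)) * linearLift R (a · t) =
      ∑ t ∈ S, (z ^ (f t).val - y ^ (f t).val - ((f t).val : MvPolynomial V R) * (z - y)) *
          linearLift R (a · t) +
        (∑ t ∈ S, linearLift R (a · t) * ((f t).val : MvPolynomial V R)) * (z - y) := by
    rw [sum_mul, ← sum_add_distrib]
    refine sum_congr rfl fun t _ ↦ ?_
    rw [dualChar_apply_neg hz hzy, dualChar_apply]
    ring
  have hlift := natCast_dvd_sum_linearLift_mul_sub (R := R) S (fun t u ↦ a u t) f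
  rw [sum_apply_smul_coeff ha] at hlift
  rw [hsum, add_sub_assoc, mul_comm (z - y) (linearLift R f), ← sub_mul]
  exact dvd_add (dvd_sum fun t _ ↦ (sq_mul_dvd_pow_sub_pow_sub hzy _).mul_right _)
    (mul_dvd_mul_right (hdvd.trans hlift) _)

variable {ι : Type*} [Fintype ι] [Fact p.Prime] [IsDomain R] {ζ : R}

lemma exists_permanent_dualChar_ne_zero [DecidableEq ι] [Finite V] (hodd : Odd p)
    (hζ : IsPrimitiveRoot ζ p) (hprime : Prime (ζ - 1))
    (hassoc : Associated ((ζ - 1) ^ (p - 1)) (p : R)) {k : ℕ}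
    (hk : 2 * Fintype.card ι + 1 = p ^ k) (hz : (C ζ : MvPolynomial V R) ^ p = 1)
    {f : ι → Module.Dual (ZMod p) V} (hf : ∀ j, f j ≠ 0)
    {S : ι → Finset V} (hS : ∀ i, Submodule.span (ZMod p) (S i : Set V) = ⊤) :
    ∃ d : ι → V, (∀ i, d i ∈ S i) ∧
      permanent (.of fun j i ↦ dualChar hz (f j) (d i) - dualChar hz (f j) (-d i)) ≠ 0 := by
  have hp : p.Prime := Fact.out
  have := Fintype.ofFinite V
  let z : MvPolynomial V R := C ζ
  let y := z ^ (p - 1)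
  have hzy : z * y = 1 := (mul_pow_sub_one hp.ne_zero z).trans hz
  have hπ : z - 1 = C (ζ - 1) := by simp [z]
  have hassoc' : Associated ((z - 1) ^ (p - 1)) (p : MvPolynomial V R) := by
    simpa [hπ] using hassoc.map (C : R →+* MvPolynomial V R)
  have hdvd : (z - 1) ^ 2 ∣ (p : MvPolynomial V R) :=
    (pow_dvd_pow _ (by have := hp.two_le; grind)).trans hassoc'.dvd
  have hβ : ∀ j, ¬z - 1 ∣ linearLift R (f j) := fun j hj ↦ hf j <| DFunLike.coe_injective <|
    eq_zero_of_C_dvd_linearLift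
      (fun n ↦ (dvd_natCast_iff_of_associated_pow hprime hassoc n).1) (hπ ▸ hj)
  have hzy' : z - y ≠ 0 := sub_ne_zero_of_isPrimitiveRoot_of_odd hodd hp.ne_one
    (hζ.map_of_injective (C_injective V R)) hzy
  have hcoeff : ∀ i u, ∃ a : V → ZMod p, ∑ t ∈ S i, a t • t = u := fun i u ↦ by
    obtain ⟨a, -, ha⟩ := Submodule.mem_span_finset.1 ((hS i).ge (Submodule.mem_top (x := u)))
    exact ⟨a, ha⟩
  choose a ha using hcoeff
  refine exists_mem_permanent_ne_zero S (fun j t ↦ dualChar hz (f j) t - dualChar hz (f j) (-t))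
    (fun i t ↦ linearLift R (a i · t)) ?_
  exact permanent_ne_zero_of_sq_mul_dvd_sub (hπ ▸ (prime_C_iff V).2 hprime) hassoc' hk hzy' hβ
    fun j i ↦ sq_mul_dvd_sum_dualChar_sub_mul_linearLift hz hzy hdvd (ha i) (f j)

lemma exists_injective_zeroPairs_of_span_eq_top [Finite V] [CharZero R] (hodd : Odd p)
    (hζ : IsPrimitiveRoot ζ p) (hprime : Prime (ζ - 1))
    (hassoc : Associated ((ζ - 1) ^ (p - 1)) (p : R))
    (hι : Nat.card V = 2 * Fintype.card ι + 1)
    {S : ι → Finset V} (hS : ∀ i, Submodule.span (ZMod p) (S i : Set V) = ⊤) :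
    ∃ x d : ι → V, Function.Injective (zeroPairs x (x + d)) ∧ ∀ i, d i ∈ S i := by
  classical
  have := Fintype.ofFinite V
  have hz : IsPrimitiveRoot (C ζ : MvPolynomial V R) p := hζ.map_of_injective (C_injective V R)
  have hV : Nat.card V = p ^ Module.finrank (ZMod p) V := by
    rw [Module.natCard_eq_pow_finrank (K := ZMod p), Nat.card_zmod]
  have hdual : Nat.card (Module.Dual (ZMod p) V) = 2 * Fintype.card ι + 1 := by
    rw [Module.natCard_eq_pow_finrank (K := ZMod p), Subspace.dual_finrank_eq, Nat.card_zmod, ← hV,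
      hι]
  have : Finite (Module.Dual (ZMod p) V) := Module.finite_of_finite (ZMod p)
  obtain ⟨f, hf⟩ := exists_bijective_zeroPairs hdual
  obtain ⟨d, hdS, hper⟩ := exists_permanent_dualChar_ne_zero hodd hζ hprime hassoc
    (hι.symm.trans hV) hz.pow_eq_one (injective_zeroPairs_iff.1 hf.injective).2.1 hS
  let χ : ι → AddChar V (MvPolynomial V R) := dualChar hz.pow_eq_one ∘ f
  have hχ : Function.Injective (zeroPairs (-χ) χ) := by
    convert (dualChar_injective hz).comp hf.injective using 1
    ext1 c
    rw [Function.comp_apply, map_zeroPairs]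
    congr 1
    ext1 j
    simp [χ]
  obtain ⟨x, hx⟩ := exists_injective_zeroPairs_of_permanent_ne_zero (by simp) hχ d hper
  exact ⟨x, d, hx, hdS⟩

end Assembly

theorem partition_vector_space_pairs_general {p : ℕ} [Fact p.Prime] (hodd : Odd p) {V : Type*}
    [AddCommGroup V] [Module (ZMod p) V] [Finite V] {ι : Type*} [Fintype ι]
    (hι : Nat.card V = 2 * Fintype.card ι + 1) (S : ι → Set V)
    (hS : ∀ i, Submodule.span (ZMod p) (S i) = ⊤) :
    ∃ x y : ι → V, (∀ i, x i ≠ 0) ∧ (∀ i, y i ≠ 0) ∧ Function.Injective (Sum.elim x y) ∧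
      ∀ i, y i - x i ∈ S i := by
  classical
  lift S to ι → Finset V using fun i ↦ (S i).toFinite
  have : NeZero (p : ℚ) := ⟨Nat.cast_ne_zero.2 (Fact.out : p.Prime).ne_zero⟩
  have : IsCyclotomicExtension {p} ℚ (CyclotomicField p ℚ) :=
    CyclotomicField.isCyclotomicExtension p ℚ
  have hζ := IsCyclotomicExtension.zeta_spec p ℚ (CyclotomicField p ℚ)
  obtain ⟨x, d, hinj, hd⟩ := exists_injective_zeroPairs_of_span_eq_top hodd
    hζ.toInteger_isPrimitiveRoot hζ.zeta_sub_one_prime'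
    (IsCyclotomicExtension.Rat.associated_zeta_sub_one_pow_prime p hζ) hι hS
  obtain ⟨hx, hy, hxy⟩ := injective_zeroPairs_iff.1 hinj
  exact ⟨x, x + d, hx, hy, hxy, fun i ↦ by simpa using hd i⟩

/-- Partition of the nonzero elements of a `k`-dimensional
vector space over `F_p` (p an odd prime) into pairs whose differences are
chosen among prescribed bases. -/
theorem partition_vector_space_pairs (p : ℕ) (hp : p.Prime) (hodd : Odd p)
    (k : ℕ) (V : Type*) [AddCommGroup V] [Module (ZMod p) V]
    [Module.Finite (ZMod p) V]
    (hdim : Module.finrank (ZMod p) V = k)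
    (m : ℕ) (hm : m = (p ^ k - 1) / 2)
    (v : Fin m → Fin k → V)
    (hv : ∀ i, LinearIndependent (ZMod p) (v i) ∧
      Submodule.span (ZMod p) (Set.range (v i)) = ⊤) :
    ∃ (x y : Fin m → V) (g : Fin m → Fin k),
      (∀ i, x i ≠ 0) ∧ (∀ i, y i ≠ 0) ∧
      Function.Injective (Sum.elim x y) ∧
      ∀ i, y i - x i = v i (g i) := by
  have : Fact p.Prime := ⟨hp⟩
  have : Finite V := Module.finite_of_finite (ZMod p)
  have hcard : Nat.card V = 2 * Fintype.card (Fin m) + 1 := by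
    obtain ⟨n, hn⟩ : Odd (p ^ k) := hodd.pow
    rw [Module.natCard_eq_pow_finrank (K := ZMod p), hdim, Nat.card_zmod, Fintype.card_fin, hm]
    omega
  obtain ⟨x, y, hx, hy, hxy, hdiff⟩ :=
    partition_vector_space_pairs_general hodd hcard (fun i ↦ Set.range (v i)) fun i ↦ (hv i).2
  choose g hg using hdiff
  exact ⟨x, y, g, hx, hy, hxy, fun i ↦ (hg i).symm⟩
end

section
/- Let p be a prime, α a positive integer, and let A and B be nonempty subsets of ℤ/(p^α). Then |A + B| ≥ β_p(|A|, |B|), where β_p(r, s) is the smallest non-negative integer n such that p divides the binomial coefficient C(n, k) for all integers k in the range n - r < k < s. -/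
open Pointwise

/-- `betaP p r s` is the smallest non-negative integer `n` such that `p`
divides the binomial coefficient `C(n, k)` for all integers `k` in the range
`n - r < k < s`. -/
noncomputable def betaP (p r s : ℕ) : ℕ :=
  sInf {n : ℕ | ∀ k : ℕ, (n : ℤ) - (r : ℤ) < (k : ℤ) → k < s → p ∣ n.choose k}

/-!
A faithful character `χ` of a `p`-primary group takes its values in a ring of algebraic integers,
and `χ (A + B) = χ A * χ B`. The polynomial `∏ (X Y - c)`, with `c` running over `χ A * χ B`,
vanishes on `χ A × χ B`, so the Combinatorial Nullstellensatz puts it in the ideal generated by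
`∏ (X - a)` and `∏ (Y - b)`. Modulo a prime above `p` every root of unity of `p`-power order becomes
`1`, so after the shift `X ↦ 1 + X`, `Y ↦ 1 + Y` the membership reads
`(X + Y + X Y) ^ n ∈ (X ^ |A|, Y ^ |B|)` with `n = |A + B|`. The coefficient of `X ^ (n - k) Y ^ k`
on the left is `n.choose k`, and it must vanish modulo `p` as soon as `n - k < |A|` and `k < |B|`.
-/

section BivariateCoefficients

open Polynomial
open scoped Polynomial.Bivariate

variable {R : Type*} [CommRing R]

-- When `n < k`, the truncated difference `n - k` is `0` and both sides vanish.
theorem coeff_coeff_one_add_mul_one_add_sub_one_pow (n k : ℕ) :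
    ((((1 + C X) * (1 + Y) - 1 : R[X][Y]) ^ n).coeff k).coeff (n - k) = n.choose k := by
  have expand : ((1 + C X) * (1 + Y) - 1 : R[X][Y]) ^ n =
      ((X + C X) ^ n : R[X][Y]).comp (C (1 + X) * Y) := by
    simp only [pow_comp, add_comp, X_comp, C_comp, map_add, map_one]
    ring
  rw [expand, comp_C_mul_X_coeff, coeff_X_add_C_pow, mul_assoc, coeff_X_pow_mul', if_pos le_rfl,
    Nat.sub_self, coeff_zero_eq_eval_zero]
  simp

theorem coeff_coeff_eq_zero_of_mem_span_X_pow {r s i j : ℕ} {f : R[X][Y]}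
    (hf : f ∈ Ideal.span {C X ^ r, Y ^ s}) (hi : i < r) (hj : j < s) :
    (f.coeff j).coeff i = 0 := by
  obtain ⟨g, h, rfl⟩ := Ideal.mem_span_pair.1 hf
  rw [← C_pow, coeff_add, coeff_mul_C, coeff_mul_X_pow', if_neg hj.not_ge, add_zero,
    coeff_mul_X_pow', if_neg hi.not_ge]

theorem betaP_le_of_mem_span {p n r s : ℕ} [CharP R p]
    (h : ((1 + C X) * (1 + Y) - 1 : R[X][Y]) ^ n ∈ Ideal.span {C X ^ r, Y ^ s}) :
    betaP p r s ≤ n := by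
  refine Nat.sInf_le fun k hk hks ↦ ?_
  rcases lt_or_ge n k with hnk | hkn
  · simp [Nat.choose_eq_zero_of_lt hnk]
  · rw [← CharP.cast_eq_zero_iff R p, ← coeff_coeff_one_add_mul_one_add_sub_one_pow n k]
    exact coeff_coeff_eq_zero_of_mem_span_X_pow h (by omega) hks

end BivariateCoefficients

section Nullstellensatz

open MvPolynomial

variable {R : Type*} [CommRing R] [IsDomain R]

theorem mem_span_prod_X_sub_C_of_eval_eq_zero {σ : Type*} [Finite σ] {S : σ → Finset R}
    (hS : ∀ i, (S i).Nonempty) {f : MvPolynomial σ R}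
    (hf : ∀ x : σ → R, (∀ i, x i ∈ S i) → eval x f = 0) :
    f ∈ Ideal.span (Set.range fun i ↦ ∏ s ∈ S i, (X i - C s)) := by
  obtain ⟨h, -, rfl⟩ := combinatorial_nullstellensatz_exists_linearCombination S hS f hf
  exact Finsupp.mem_span_range_iff_exists_finsupp.2 ⟨h, rfl⟩

theorem prod_X_mul_X_sub_C_mem_span [DecidableEq R] {A B : Finset R}
    (hA : A.Nonempty) (hB : B.Nonempty) :
    ∏ c ∈ A * B, (X 0 * X 1 - C c) ∈
      Ideal.span {∏ a ∈ A, (X 0 - C a), ∏ b ∈ B, (X 1 - C b : MvPolynomial (Fin 2) R)} := by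
  have vanishes : ∀ x : Fin 2 → R, (∀ i, x i ∈ ![A, B] i) →
      eval x (∏ c ∈ A * B, (X 0 * X 1 - C c)) = 0 := fun x hx ↦ by
    rw [map_prod]
    exact Finset.prod_eq_zero (Finset.mul_mem_mul (hx 0) (hx 1)) (by simp)
  have mem := mem_span_prod_X_sub_C_of_eval_eq_zero (Fin.forall_fin_two.2 ⟨hA, hB⟩) vanishes
  convert mem using 2
  ext g
  simp [Fin.exists_fin_two, eq_comm]

end Nullstellensatz

section Multiplicative

variable {R F : Type*} [CommRing R] [IsDomain R] [DecidableEq R] [CommRing F]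

open Polynomial in
open scoped Polynomial.Bivariate in
theorem betaP_card_le_card_mul {p : ℕ} [CharP F p] (φ : R →+* F) {A B : Finset R}
    (hA : A.Nonempty) (hB : B.Nonempty) (hφA : ∀ a ∈ A, φ a = 1) (hφB : ∀ b ∈ B, φ b = 1) :
    betaP p A.card B.card ≤ (A * B).card := by
  let shift : MvPolynomial (Fin 2) R →+* F[X][Y] :=
    MvPolynomial.eval₂Hom ((C.comp C).comp φ) ![1 + C X, 1 + Y]
  have shift_prod_sub_C (P : MvPolynomial (Fin 2) R) {S : Finset R} (hS : ∀ s ∈ S, φ s = 1) :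
      shift (∏ s ∈ S, (P - .C s)) = (shift P - 1) ^ S.card := by
    rw [map_prod]
    exact Finset.prod_eq_pow_card fun s hs ↦ by simp [shift, hS s hs]
  have shift_X_zero : shift (.X 0) = 1 + C X := by simp [shift]
  have shift_X_one : shift (.X 1) = 1 + Y := by simp [shift]
  have hφAB : ∀ c ∈ A * B, φ c = 1 := fun c hc ↦ by
    obtain ⟨a, ha, b, hb, rfl⟩ := Finset.mem_mul.1 hc
    rw [map_mul, hφA a ha, hφB b hb, one_mul]
  have mem := Ideal.mem_map_of_mem shift (prod_X_mul_X_sub_C_mem_span hA hB)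
  rw [Ideal.map_span, Set.image_pair, shift_prod_sub_C _ hφA, shift_prod_sub_C _ hφB,
    shift_prod_sub_C _ hφAB, map_mul, shift_X_zero, shift_X_one, add_sub_cancel_left,
    add_sub_cancel_left] at mem
  exact betaP_le_of_mem_span mem

end Multiplicative

section Characters

theorem exists_isMaximal_charP_quotient (S : Type*) [CommRing S] [Algebra.IsIntegral ℤ S]
    [FaithfulSMul ℤ S] (p : ℕ) [hp : Fact p.Prime] :
    ∃ M : Ideal S, M.IsMaximal ∧ CharP (S ⧸ M) p := by
  obtain ⟨M, hM, hMp⟩ :=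
    Ideal.exists_maximal_ideal_liesOver_of_isIntegral (S := S) (Ideal.span {(p : ℤ)})
  refine ⟨M, hM, (CharP.charP_iff_prime_eq_zero hp.out).2 ?_⟩
  have p_mem : algebraMap ℤ S p ∈ M :=
    (Ideal.mem_of_liesOver M _ _).1 (Ideal.mem_span_singleton_self _)
  rw [← map_natCast (Ideal.Quotient.mk M), Ideal.Quotient.eq_zero_iff_mem]
  simpa using p_mem

variable {G R : Type*} [AddMonoid G] [DecidableEq G] [CommRing R] [IsDomain R]

theorem betaP_card_le_card_add_of_isIntegral [Algebra.IsIntegral ℤ R] [FaithfulSMul ℤ R]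
    {p : ℕ} [Fact p.Prime] {χ : AddChar G R} (hχ : Function.Injective χ)
    (hG : ∀ g : G, ∃ k : ℕ, p ^ k • g = 0) {A B : Finset G} (hA : A.Nonempty) (hB : B.Nonempty) :
    betaP p A.card B.card ≤ (A + B).card := by
  classical
  obtain ⟨M, hM, _⟩ := exists_isMaximal_charP_quotient R p
  have mk_χ (g : G) : Ideal.Quotient.mk M (χ g) = 1 := by
    obtain ⟨k, hk⟩ := hG g
    rw [← pow_one (Ideal.Quotient.mk M _), ← ExpChar.pow_prime_pow_mul_eq_one_iff p k, mul_one,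
      ← map_pow, ← χ.map_nsmul_eq_pow, hk, χ.map_zero_eq_one, map_one]
  have image_add : (A + B).image χ = A.image χ * B.image χ :=
    Finset.image_image₂_distrib χ.map_add_eq_mul
  have card_image (s : Finset G) : (s.image χ).card = s.card :=
    Finset.card_image_of_injective s hχ
  rw [← card_image A, ← card_image B, ← card_image (A + B), image_add]
  exact betaP_card_le_card_mul (Ideal.Quotient.mk M) (hA.image χ) (hB.image χ)
    (Finset.forall_mem_image.2 fun g _ ↦ mk_χ g) (Finset.forall_mem_image.2 fun g _ ↦ mk_χ g)

theorem cauchy_davenport_pow_general [CharZero R] {p : ℕ} (hp : p.Prime) {χ : AddChar G R}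
    (hχ : Function.Injective χ) (hG : ∀ g : G, ∃ k : ℕ, p ^ k • g = 0)
    {A B : Finset G} (hA : A.Nonempty) (hB : B.Nonempty) :
    betaP p A.card B.card ≤ (A + B).card := by
  have : Fact p.Prime := ⟨hp⟩
  have χ_isIntegral (g : G) : χ g ∈ integralClosure ℤ R := by
    obtain ⟨k, hk⟩ := hG g
    refine IsIntegral.of_pow (pow_pos hp.pos k) ?_
    rw [← χ.map_nsmul_eq_pow, hk, χ.map_zero_eq_one]
    exact isIntegral_one
  let χ' : AddChar G (integralClosure ℤ R) := AddChar.toMonoidHomEquiv.symm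
    (χ.toMonoidHom.codRestrict (integralClosure ℤ R) fun g ↦ χ_isIntegral g.toAdd)
  have hχ' : Function.Injective χ' := fun a b hab ↦ hχ (congrArg Subtype.val hab)
  exact betaP_card_le_card_add_of_isIntegral hχ' hG hA hB

end Characters

/-- Cauchy–Davenport type bound for `ℤ/(p^α)`. -/
theorem cauchy_davenport_pow (p : ℕ) (hp : p.Prime) (α : ℕ) (hα : 0 < α)
    (A B : Finset (ZMod (p ^ α))) (hA : A.Nonempty) (hB : B.Nonempty) :
    betaP p A.card B.card ≤ (A + B).card := by
  have : NeZero (p ^ α) := ⟨pow_ne_zero α hp.ne_zero⟩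
  exact cauchy_davenport_pow_general hp ZMod.injective_stdAddChar
    (fun g ↦ ⟨α, by simp⟩) hA hB
end
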